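/- arXiv:2101.04871 — 2 statements merged into one kernel-verified Lean document; each statement's English description precedes it below -/
import Mathlib

section
/- Let T² = (ℝ/ℤ)² be the 2-torus. Let f : T² → T² be a homeomorphism isotopic to the identity, let F be a nonempty finite subset of the fixed-point set Fix(f) = {x : f(x) = x}, and let k ≥ 1 be an integer such that f^k is isotopic to the identity relative to F. Then f is isotopic to the identity relative to F. -/
/-- `f` is isotopic to the identity relative to `F`: there is a continuous map
`H : [0,1] × X → X` with `H t` a homeomorphism for every `t`, `H 0 = id`,
`H 1 = f`, and `H t x = x` for every `x ∈ F` and every `t`. -/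
def IsotopicToIdRel {X : Type*} [TopologicalSpace X] (f : X → X) (F : Set X) : Prop :=
  ∃ H : unitInterval × X → X, Continuous H ∧
    (∀ t : unitInterval, IsHomeomorph fun x => H (t, x)) ∧
    (∀ x, H (0, x) = x) ∧ (∀ x, H (1, x) = f x) ∧
    (∀ t : unitInterval, ∀ x ∈ F, H (t, x) = x)


/-- A commutative free group has at most one generator, hence is cyclic. -/
lemma freeGroup_comm_cyclic {G : Type*} [Group G] [IsFreeGroup G]
    (hcomm : ∀ a b : G, a * b = b * a) : ∃ z : G, ∀ g : G, ∃ n : ℤ, g = z ^ n := by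
  classical
  have hsub : ∀ a b : IsFreeGroup.Generators G, a = b := by
    intro a b
    by_contra hab
    let φ : G →* Equiv.Perm (Fin 3) :=
      IsFreeGroup.lift (fun i => if i = a then Equiv.swap 0 1 else Equiv.swap 1 2)
    have h := congrArg φ (hcomm (IsFreeGroup.of a) (IsFreeGroup.of b))
    simp only [map_mul, φ, IsFreeGroup.lift_of, if_true, if_neg (Ne.symm hab)] at h
    revert h
    decide
  rcases isEmpty_or_nonempty (IsFreeGroup.Generators G) with he | ⟨⟨a⟩⟩
  · refine ⟨1, fun g => ⟨0, ?_⟩⟩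
    have : MonoidHom.id G = 1 := IsFreeGroup.ext_hom fun a => (he.false a).elim
    simpa using congrArg (fun f : G →* G => f g) this
  · refine ⟨IsFreeGroup.of a, fun g => ?_⟩
    let φ : G →* Multiplicative ℤ := IsFreeGroup.lift (fun _ => Multiplicative.ofAdd 1)
    have : MonoidHom.id G = (zpowersHom G (IsFreeGroup.of a)).comp φ := by
      apply IsFreeGroup.ext_hom
      intro b
      rw [hsub b a]
      simp [φ, IsFreeGroup.lift_of, zpowersHom_apply]
    refine ⟨Multiplicative.toAdd (φ g), ?_⟩
    simpa [zpowersHom_apply] using congrArg (fun f : G →* G => f g) this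

/-- An element commuting with a generator is a power of it. -/
lemma freeGroup_commute_of {α : Type*} [DecidableEq α] (a : α) (w : FreeGroup α)
    (h : w * FreeGroup.of a = FreeGroup.of a * w) : ∃ n : ℤ, w = FreeGroup.of a ^ n := by
  let H : Subgroup (FreeGroup α) := Subgroup.closure {w, FreeGroup.of a}
  have hc : ∀ x y : H, x * y = y * x := by
    have := Subgroup.isMulCommutative_closure (k := {w, FreeGroup.of a}) (by
      rintro x (rfl | rfl) y (rfl | rfl) <;> simp [h])
    intro x y
    exact (this.is_comm.comm x y)
  obtain ⟨z, hz⟩ := freeGroup_comm_cyclic hc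
  obtain ⟨i, hi⟩ := hz ⟨w, Subgroup.subset_closure (by simp)⟩
  obtain ⟨j, hj⟩ := hz ⟨FreeGroup.of a, Subgroup.subset_closure (by simp)⟩
  have hi' : w = (z : FreeGroup α) ^ i := by simpa using congrArg Subtype.val hi
  have hj' : FreeGroup.of a = (z : FreeGroup α) ^ j := by simpa using congrArg Subtype.val hj
  let e : FreeGroup α →* Multiplicative ℤ := FreeGroup.lift (fun _ => Multiplicative.ofAdd 1)
  have he := congrArg (fun g => Multiplicative.toAdd (e g)) hj'
  simp [e] at he
  have hj1 : j * j = 1 := by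
    rcases Int.isUnit_iff.mp (IsUnit.of_mul_eq_one _ he.symm) with h | h <;> rw [h] <;> rfl
  refine ⟨j * i, ?_⟩
  rw [hj', ← zpow_mul, ← mul_assoc, hj1, one_mul, hi']

lemma freeGroup_central_pow {α : Type*} {a b : α} (hab : a ≠ b) (w : FreeGroup α) (k : ℕ)
    (hk : 1 ≤ k) (h : ∀ g, w ^ k * g = g * w ^ k) : w = 1 := by
  classical
  obtain ⟨m, hm⟩ := freeGroup_commute_of a _ (h (FreeGroup.of a))
  obtain ⟨n, hn⟩ := freeGroup_commute_of b _ (h (FreeGroup.of b))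
  let e : FreeGroup α →* Multiplicative ℤ :=
    FreeGroup.lift (fun i => if i = a then Multiplicative.ofAdd 1 else 1)
  have := congrArg (fun g => Multiplicative.toAdd (e g)) (hm.symm.trans hn)
  simp [e, hab.symm] at this
  rw [this, zpow_zero] at hm
  exact (pow_eq_one_iff_left (by omega)).mp hm


open Topology Set

section VK

variable {X : Type*} [TopologicalSpace X]

open Path.Homotopic (Quotient)

lemma homotopic_of_subset {s : Set X} (hs : IsSimplyConnected s) {x y : X} (p q : Path x y)
    (hp : ∀ t, p t ∈ s) (hq : ∀ t, q t ∈ s) : p.Homotopic q := by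
  have := hs.simplyConnectedSpace
  let x' : s := ⟨x, by simpa using hp 0⟩
  let y' : s := ⟨y, by simpa using hp 1⟩
  let p' : Path x' y' :=
    { toFun := fun t => ⟨p t, hp t⟩
      source' := Subtype.ext p.source
      target' := Subtype.ext p.target }
  let q' : Path x' y' :=
    { toFun := fun t => ⟨q t, hq t⟩
      source' := Subtype.ext q.source
      target' := Subtype.ext q.target }
  have h := (SimplyConnectedSpace.paths_homotopic p' q').map ⟨Subtype.val, continuous_subtype_val⟩
  exact h

/-- canonical class of paths inside the simply connected set -/
noncomputable def canPath (s : Set X) (hs : IsSimplyConnected s) {x₀ z : X} (h₀ : x₀ ∈ s)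
    (hz : z ∈ s) : Path.Homotopic.Quotient x₀ z :=
  Path.Homotopic.Quotient.mk (hs.isPathConnected.joinedIn x₀ h₀ z hz).somePath

lemma canPath_eq {s : Set X} (hs : IsSimplyConnected s) {x₀ z : X} (h₀ : x₀ ∈ s)
    (hz : z ∈ s) (p : Path x₀ z) (hp : ∀ t, p t ∈ s) :
    canPath s hs h₀ hz = Path.Homotopic.Quotient.mk p := by
  apply Path.Homotopic.Quotient.eq.mpr
  exact homotopic_of_subset hs _ _ (JoinedIn.somePath_mem _) hp

lemma canPath_trans {s : Set X} (hs : IsSimplyConnected s) {x₀ x y : X} (h₀ : x₀ ∈ s)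
    (hx : x ∈ s) (hy : y ∈ s) (p : Path x y) (hp : ∀ t, p t ∈ s) :
    (canPath s hs h₀ hx).trans (Path.Homotopic.Quotient.mk p) = canPath s hs h₀ hy := by
  rw [canPath, ← Path.Homotopic.Quotient.mk_trans]
  symm
  apply canPath_eq
  intro t
  rw [Path.trans_apply]
  split_ifs
  · apply JoinedIn.somePath_mem
  · apply hp

lemma canPath_self {s : Set X} (hs : IsSimplyConnected s) {x₀ : X} (h₀ h₀' : x₀ ∈ s) :
    canPath s hs h₀ h₀' = .refl x₀ := by
  rw [canPath_eq hs h₀ h₀' (Path.refl x₀) (fun t => h₀)]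
  rfl

lemma qsymm_trans {x y z : X} (a : Quotient x y) (b : Quotient y z) :
    (a.trans b).symm = b.symm.trans a.symm := by
  induction a using Path.Homotopic.Quotient.ind with | mk a =>
  induction b using Path.Homotopic.Quotient.ind with | mk b =>
  rw [← Path.Homotopic.Quotient.mk_trans, ← Path.Homotopic.Quotient.mk_symm, Path.trans_symm]
  rfl

lemma qsymm_symm {x y : X} (a : Quotient x y) : a.symm.symm = a := by
  induction a using Path.Homotopic.Quotient.ind with | mk a =>
  rw [← Path.Homotopic.Quotient.mk_symm, ← Path.Homotopic.Quotient.mk_symm, Path.symm_symm]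

lemma qsymm_refl (x : X) : (Quotient.refl x).symm = Quotient.refl x := by
  rw [← Path.Homotopic.Quotient.mk_refl, ← Path.Homotopic.Quotient.mk_symm, Path.refl_symm]

lemma qcancel {x y z : X} (a : Quotient x y) (b : Quotient y z) :
    a.symm.trans (a.trans b) = b := by
  rw [← Path.Homotopic.Quotient.trans_assoc]; simp

lemma qcancel' {x y z : X} (a : Quotient x y) (b : Quotient x z) :
    a.trans (a.symm.trans b) = b := by
  rw [← Path.Homotopic.Quotient.trans_assoc]; simp

/-- transition loop -/
noncomputable def cLoop (S : Bool → Set X) (hS : ∀ i, IsSimplyConnected (S i)) {x₀ : X}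
    (h₀ : ∀ i, x₀ ∈ S i) {z : X} (hz : ∀ i, z ∈ S i) : Quotient x₀ x₀ :=
  (canPath (S true) (hS true) (h₀ true) (hz true)).trans
    (canPath (S false) (hS false) (h₀ false) (hz false)).symm

lemma cLoop_eq (S : Bool → Set X) (hS : ∀ i, IsSimplyConnected (S i)) {x₀ : X}
    (h₀ : ∀ i, x₀ ∈ S i) {z z' : X} (hz : ∀ i, z ∈ S i) (hz' : ∀ i, z' ∈ S i)
    (p : Path z z') (hp : ∀ i t, p t ∈ S i) : cLoop S hS h₀ hz = cLoop S hS h₀ hz' := by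
  unfold cLoop
  rw [← canPath_trans (hS true) (h₀ true) (hz true) (hz' true) p (hp true),
    ← canPath_trans (hS false) (h₀ false) (hz false) (hz' false) p (hp false)]
  rw [qsymm_trans, Path.Homotopic.Quotient.trans_assoc, qcancel']

/-- every loop lies in a subgroup containing the transition loops -/
lemma mem_of_cLoop_mem (S : Bool → Set X) (hSo : ∀ i, IsOpen (S i))
    (hS : ∀ i, IsSimplyConnected (S i)) (hcov : ∀ z, ∃ i, z ∈ S i) {x₀ : X}
    (h₀ : ∀ i, x₀ ∈ S i) (R : Subgroup (FundamentalGroup X x₀))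
    (hR : ∀ z (hz : ∀ i, z ∈ S i), FundamentalGroup.fromPath (cLoop S hS h₀ hz) ∈ R)
    (γ : FundamentalGroup X x₀) : γ ∈ R := by
  let W : ∀ {x y : X} (i j : Bool) (_ : x ∈ S i) (_ : y ∈ S j) (_ : Quotient x y),
      FundamentalGroup X x₀ := fun {x y} i j hx hy p =>
    ((canPath (S i) (hS i) (h₀ i) hx).trans p).trans (canPath (S j) (hS j) (h₀ j) hy).symm
  have hWmul : ∀ {x y z : X} (i j k : Bool) (hx : x ∈ S i) (hy : y ∈ S j) (hz : z ∈ S k)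
      (p : Quotient x y) (q : Quotient y z),
      W i k hx hz (p.trans q) = W j k hy hz q * W i j hx hy p := by
    intro x y z i j k hx hy hz p q
    rw [FundamentalGroup.mul_def]
    simp only [W, Path.Homotopic.Quotient.trans_assoc, qcancel]
  have hWc : ∀ (x : X) (i j : Bool) (hi : x ∈ S i) (hj : x ∈ S j),
      W i j hi hj (.refl x) ∈ R := by
    intro x i j hi hj
    by_cases hij : i = j
    · subst hij
      have : W i i hi hj (.refl x) = 1 := by
        rw [FundamentalGroup.one_def]
        simp [W]
      rw [this]; exact R.one_mem
    · have hz : ∀ i, x ∈ S i := by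
        intro b
        cases b <;> cases i <;> cases j <;> simp_all
      have hc := hR x hz
      cases i <;> cases j <;> first | exact absurd rfl hij | skip
      · have : W false true hi hj (.refl x) = (FundamentalGroup.fromPath (cLoop S hS h₀ hz))⁻¹ := by
          rw [FundamentalGroup.inv_def]
          simp [W, cLoop, qsymm_trans, qsymm_symm]
        rw [this]; exact R.inv_mem hc
      · have : W true false hi hj (.refl x) = FundamentalGroup.fromPath (cLoop S hS h₀ hz) := by
          simp [W, cLoop]
        rw [this]; exact hc
  have hWin : ∀ {x y : X} (k : Bool) (i j : Bool) (hi : x ∈ S i) (hj : y ∈ S j) (p : Path x y),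
      (∀ t, p t ∈ S k) → W i j hi hj (.mk p) ∈ R := by
    intro x y k i j hi hj p hp
    have hx : x ∈ S k := by simpa using hp 0
    have hy : y ∈ S k := by simpa using hp 1
    have e : (Path.Homotopic.Quotient.mk p) =
      ((Path.Homotopic.Quotient.refl x).trans (.mk p)).trans (.refl y) := by simp
    rw [e, hWmul i k j hi hy hj, hWmul i k k hi hx hy]
    refine R.mul_mem (hWc _ _ _ _ _) (R.mul_mem ?_ (hWc _ _ _ _ _))
    have : W k k hx hy (.mk p) = 1 := by
      rw [FundamentalGroup.one_def]
      simp only [W]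
      rw [canPath_trans (hS k) (h₀ k) hx hy p hp]
      simp
    rw [this]; exact R.one_mem
  obtain ⟨p, rfl⟩ := Path.Homotopic.Quotient.mk_surjective γ
  obtain ⟨t, t_0, t_mono, ⟨n_max, h_max⟩, t_sub⟩ :=
    exists_monotone_Icc_subset_open_cover_unitInterval
    (c := fun i => p ⁻¹' (S i)) (fun i ↦ (hSo i).preimage p.continuous) (fun s _ ↦ by
      obtain ⟨i, hi⟩ := hcov (p s)
      exact mem_iUnion.2 ⟨i, hi⟩)
  have key : ∀ n, ∀ i j (hi : p (t 0) ∈ S i) (hj : p (t n) ∈ S j),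
      W i j hi hj (.mk (p.subpath (t 0) (t n))) ∈ R := by
    intro n
    induction n with
    | zero =>
      intro i j hi hj
      rw [Path.subpath_self]
      exact hWc _ _ _ _ _
    | succ n ih =>
      intro i j hi hj
      obtain ⟨k, hk⟩ := t_sub n
      have hk0 : p (t n) ∈ S k := hk ⟨le_rfl, t_mono n.le_succ⟩
      have e : Path.Homotopic.Quotient.mk (p.subpath (t 0) (t (n+1))) =
        (Path.Homotopic.Quotient.mk (p.subpath (t 0) (t n))).trans
          (.mk (p.subpath (t n) (t (n+1)))) := by
        rw [← Path.Homotopic.Quotient.mk_trans]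
        exact (Path.Homotopic.Quotient.eq.mpr ⟨Path.Homotopy.subpathTransSubpath p _ _ _⟩).symm
      rw [e, hWmul i k j hi hk0 hj]
      refine R.mul_mem (hWin k _ _ _ _ _ ?_) (ih _ _ _ _)
      intro s
      have : p.subpath (t n) (t (n+1)) s ∈ range (p.subpath (t n) (t (n+1))) := ⟨s, rfl⟩
      rw [Path.range_subpath_of_le p _ _ (t_mono n.le_succ)] at this
      obtain ⟨u, hu, hu'⟩ := this
      rw [← hu']
      exact hk hu
  have hfin := key n_max true true
  rw [t_0, h_max _ le_rfl, Path.subpath_zero_one] at hfin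
  have hgen : ∀ (x' y' : X) (hx : x' = x₀) (hy : y' = x₀) (hi : x' ∈ S true) (hj : y' ∈ S true),
      W true true hi hj (.mk (p.cast hx hy)) = (Path.Homotopic.Quotient.mk p : FundamentalGroup X x₀) := by
    intro x' y' hx hy hi hj
    subst hx
    subst hy
    simp [W, canPath_self, qsymm_refl]
  have h0 : p 0 ∈ S true := by simpa using h₀ true
  have h1 : p 1 ∈ S true := by simpa using h₀ true
  have := hfin h0 h1
  rw [hgen] at this
  exact this
end VK


open Topology Set

section Cov

universe u
variable {X : Type u} [TopologicalSpace X]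

/-- the bundle core with transition functions given by left multiplications -/
noncomputable def starCore {G : Type u} [Group G] [TopologicalSpace G] [DiscreteTopology G]
    (S : Bool → Set X) (hSo : ∀ i, IsOpen (S i)) (hcov : ∀ z, ∃ i, z ∈ S i) (e : Bool → X → G)
    (he : ∀ i j x, x ∈ S i → x ∈ S j →
      ∀ᶠ y in 𝓝 x, e j y * (e i y)⁻¹ = e j x * (e i x)⁻¹) : FiberBundleCore Bool X G where
  baseSet := S
  isOpen_baseSet := hSo
  indexAt := fun x => (hcov x).choose
  mem_baseSet_at := fun x => (hcov x).choose_spec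
  coordChange := fun i j x v => e j x * (e i x)⁻¹ * v
  coordChange_self := by intro i x _ v; simp
  continuousOn_coordChange := by
    rintro i j ⟨x, v⟩ ⟨⟨hi, hj⟩, -⟩
    apply ContinuousAt.continuousWithinAt
    have h1 : ∀ᶠ p : X × G in 𝓝 (x, v), e j p.1 * (e i p.1)⁻¹ = e j x * (e i x)⁻¹ :=
      (continuousAt_fst (p := (x, v))).eventually (he i j x hi hj)
    have h2 : ∀ᶠ p : X × G in 𝓝 (x, v), p.2 = v :=
      (continuousAt_snd (p := (x, v))).eventually
        (show ∀ᶠ w in 𝓝 v, w = v by simp [nhds_discrete])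
    have : (fun p : X × G => e j p.1 * (e i p.1)⁻¹ * p.2) =ᶠ[𝓝 (x, v)]
        fun _ => e j x * (e i x)⁻¹ * v := by
      filter_upwards [h1, h2] with p h1 h2
      rw [h1, h2]
    exact continuousAt_const.congr this.symm
  coordChange_comp := by
    intro i j k x _ v
    group

lemma exists_cover {G : Type u} [Group G]
    (S : Bool → Set X) (hSo : ∀ i, IsOpen (S i)) (hcov : ∀ z, ∃ i, z ∈ S i) (e : Bool → X → G)
    (he : ∀ i j x, x ∈ S i → x ∈ S j →
      ∀ᶠ y in 𝓝 x, e j y * (e i y)⁻¹ = e j x * (e i x)⁻¹) :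
    ∃ (E : Type u) (_ : TopologicalSpace E) (p : E → X) (cov : IsCoveringMap p)
      (s : Bool → ∀ x : X, G → p ⁻¹' {x}),
      (∀ i j x v, s i x v = s j x (e j x * (e i x)⁻¹ * v)) ∧
      (∀ i x, Function.Injective (s i x)) ∧
      ∀ i (x y : X) (P : Path x y), (∀ t, P t ∈ S i) → ∀ v,
        cov.monodromy (.mk P) (s i x v) = s i y v := by
  let _ : TopologicalSpace G := ⊥
  have : DiscreteTopology G := ⟨rfl⟩
  let Z := starCore S hSo hcov e he
  have cov : IsCoveringMap (Bundle.TotalSpace.proj : Bundle.TotalSpace G Z.Fiber → X) :=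
    FiberBundle.isCoveringMap (F := G) (E := Z.Fiber)
  obtain ⟨m, hm⟩ : ∃ m : X → G → Bundle.TotalSpace G Z.Fiber, m = fun x g => ⟨x, g⟩ := ⟨_, rfl⟩
  have hmp : ∀ x g, (m x g).proj = x := by intro x g; rw [hm]
  have hmi : ∀ x g g', m x g = m x g' → g = g' := by
    intro x g g' h
    rw [hm] at h
    injection h with h1 h2
  refine ⟨Bundle.TotalSpace G Z.Fiber, inferInstance, _, cov,
    fun i x v => ⟨m x (e (Z.indexAt x) x * (e i x)⁻¹ * v), hmp _ _⟩, ?_, ?_, ?_⟩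
  · intro i j x v
    apply Subtype.ext
    dsimp only
    congr 1
    simp [mul_assoc]
  · intro i x v w h
    have h1 := congrArg Subtype.val h
    exact mul_left_cancel (hmi _ _ _ h1)
  · intro i x y P hP v
    let Γ : Path (m x (e (Z.indexAt x) x * (e i x)⁻¹ * v))
        (m y (e (Z.indexAt y) y * (e i y)⁻¹ * v)) :=
      { toFun := fun t => m (P t) (e (Z.indexAt (P t)) (P t) * (e i (P t))⁻¹ * v)
        continuous_toFun := by
          have h1 := (Z.localTriv i).continuousOn_invFun
          have h2 : Continuous fun t => (P t, v) := by fun_prop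
          rw [hm]
          exact h1.comp_continuous h2 (by
            intro t
            simp only [Z.localTriv i |>.target_eq]
            exact ⟨hP t, mem_univ _⟩)
        source' := by simp [P.source]
        target' := by simp [P.target] }
    refine cov.monodromy_eq_of_map_eq (.mk Γ) ?_
    refine congrArg Path.Homotopic.Quotient.mk ?_
    ext t
    exact hmp _ _

theorem pi1_star (S : Bool → Set X) (hSo : ∀ i, IsOpen (S i))
    (hS : ∀ i, IsSimplyConnected (S i)) (hcov : ∀ z, ∃ i, z ∈ S i) {x₀ : X}
    (h₀ : ∀ i, x₀ ∈ S i) {J : Type u} (N : X → J)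
    (hN : ∀ z, (∀ i, z ∈ S i) → ∀ᶠ z' in 𝓝 z, N z' = N z)
    (hconn : ∀ z z', (∀ i, z ∈ S i) → (∀ i, z' ∈ S i) → N z = N z' →
      ∃ p : Path z z', ∀ i t, p t ∈ S i)
    (z₁ z₂ : X) (hz₁ : ∀ i, z₁ ∈ S i) (hz₂ : ∀ i, z₂ ∈ S i)
    (h10 : N z₁ ≠ N x₀) (h20 : N z₂ ≠ N x₀) (h12 : N z₁ ≠ N z₂)
    (γ : FundamentalGroup X x₀) (k : ℕ) (hk : 1 ≤ k) (hγ : ∀ δ, γ ^ k * δ = δ * γ ^ k) :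
    γ = 1 := by
  classical
  let J' := {j : J // j ≠ N x₀ ∧ ∃ z, (∀ i, z ∈ S i) ∧ N z = j}
  let g : J → FreeGroup J' := fun j =>
    if h : j ≠ N x₀ ∧ ∃ z, (∀ i, z ∈ S i) ∧ N z = j then FreeGroup.of ⟨j, h⟩ else 1
  have hg0 : g (N x₀) = 1 := by simp [g]
  have hg1 : ∀ j : J', g j.1 = FreeGroup.of j := by
    intro j
    exact dif_pos j.2
  let e : Bool → X → FreeGroup J' := fun i x => if i then 1 else g (N x)
  have he : ∀ i j x, x ∈ S i → x ∈ S j →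
      ∀ᶠ y in 𝓝 x, e j y * (e i y)⁻¹ = e j x * (e i x)⁻¹ := by
    intro i j x hi hj
    by_cases hij : i = j
    · subst hij; simp
    · have hz : ∀ i, x ∈ S i := by
        intro b
        cases b <;> cases i <;> cases j <;> simp_all
      filter_upwards [hN x hz] with y hy
      simp only [e, hy]
  obtain ⟨E, _, p, cov, s, hs1, hs2, hs3⟩ := exists_cover S hSo hcov e he
  have hcan : ∀ i z (hz : z ∈ S i) v,
      cov.monodromy (canPath (S i) (hS i) (h₀ i) hz) (s i x₀ v) = s i z v := by
    intro i z hz v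
    exact hs3 i x₀ z _ (JoinedIn.somePath_mem _) v
  have hloop : ∀ z (hz : ∀ i, z ∈ S i) v,
      cov.monodromy (cLoop S hS h₀ hz) (s true x₀ v) = s true x₀ (g (N z) * v) := by
    intro z hz v
    unfold cLoop
    rw [cov.monodromy_trans_apply, hcan, hs1 true false, ← hcan false z (hz false),
      ← cov.monodromy_trans_apply, Path.Homotopic.Quotient.trans_symm, cov.monodromy_refl, id,
      hs1 false true]
    simp [e, hg0]
  choose zz hzz hzN using fun j : J' => j.2.2
  let φ : FreeGroup J' →* FundamentalGroup X x₀ :=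
    FreeGroup.lift fun j => FundamentalGroup.fromPath (cLoop S hS h₀ (hzz j))
  have hφ : ∀ u v, cov.monodromyPerm x₀ (φ u) (s true x₀ v) = s true x₀ (u * v) := by
    intro u
    induction u using FreeGroup.induction_on with
    | C1 => intro v; rw [map_one, map_one, Equiv.Perm.one_apply, one_mul]
    | of j =>
      intro v
      have := hloop (zz j) (hzz j) v
      rw [hzN, hg1] at this
      simpa [φ] using this
    | inv_of j ih =>
      intro v
      rw [map_inv, map_inv, Equiv.Perm.inv_eq_iff_eq, ih]
      simp
    | mul a b ha hb =>
      intro v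
      rw [map_mul, map_mul, Equiv.Perm.mul_apply, hb, ha, mul_assoc]
  have hinj : Function.Injective φ := by
    rw [injective_iff_map_eq_one]
    intro u hu
    have := hφ u 1
    rw [hu, map_one, Equiv.Perm.one_apply] at this
    simpa using (hs2 _ _ this).symm
  have hsurj : ∀ δ, δ ∈ φ.range := by
    apply mem_of_cLoop_mem S hSo hS hcov h₀
    intro z hz
    by_cases h : N z = N x₀
    · obtain ⟨q, hq⟩ := hconn z x₀ hz h₀ h
      rw [cLoop_eq S hS h₀ hz h₀ q hq]
      have : FundamentalGroup.fromPath (cLoop S hS h₀ h₀) = 1 := by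
        rw [FundamentalGroup.one_def]
        simp [cLoop, canPath_self, qsymm_refl]
      rw [this]
      exact one_mem _
    · let j : J' := ⟨N z, h, z, hz, rfl⟩
      obtain ⟨q, hq⟩ := hconn z (zz j) hz (hzz j) (hzN j).symm
      rw [cLoop_eq S hS h₀ hz (hzz j) q hq]
      exact ⟨FreeGroup.of j, by simp [φ]⟩
  obtain ⟨w, rfl⟩ := hsurj γ
  have hw : w = 1 := by
    refine freeGroup_central_pow (a := (⟨N z₁, h10, z₁, hz₁, rfl⟩ : J'))
      (b := ⟨N z₂, h20, z₂, hz₂, rfl⟩) (by simpa using h12) w k hk ?_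
    intro u
    apply hinj
    simpa using hγ (φ u)
  rw [hw, map_one]

end Cov


section Plane

lemma contr_of_push {V : Type*} [AddCommGroup V] [Module ℝ V] [TopologicalSpace V]
    [IsTopologicalAddGroup V] [ContinuousSMul ℝ V] (W : Set V) (up : V → V) (hup : Continuous up)
    (c : V)
    (h1 : ∀ z ∈ W, ∀ s : ℝ, 0 ≤ s → s ≤ 1 → (1 - s) • z + s • up z ∈ W)
    (h2 : ∀ z ∈ W, ∀ s : ℝ, 0 ≤ s → s ≤ 1 → (1 - s) • up z + s • c ∈ W) (hc : c ∈ W) :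
    ContractibleSpace W := by
  have hup' : ∀ z ∈ W, up z ∈ W := fun z hz => by simpa using h1 z hz 1 zero_le_one le_rfl
  let u : C(W, W) := ⟨fun z => ⟨up z, hup' z z.2⟩, by fun_prop⟩
  have H1 : (ContinuousMap.id W).Homotopic u := by
    refine ⟨⟨⟨fun p => ⟨(1 - p.1.1) • p.2.1 + p.1.1 • up p.2.1, h1 _ p.2.2 _ p.1.2.1 p.1.2.2⟩, ?_⟩,
      ?_, ?_⟩⟩
    · fun_prop
    · intro x; ext1; simp
    · intro x; ext1; simp [u]
  have H2 : u.Homotopic (ContinuousMap.const W ⟨c, hc⟩) := by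
    refine ⟨⟨⟨fun p => ⟨(1 - p.1.1) • up p.2.1 + p.1.1 • c, h2 _ p.2.2 _ p.1.2.1 p.1.2.2⟩, ?_⟩,
      ?_, ?_⟩⟩
    · fun_prop
    · intro x; ext1; simp [u]
    · intro x; ext1; simp
  exact (contractible_iff_id_nullhomotopic W).2 ⟨⟨c, hc⟩, H1.trans H2⟩

lemma simplyConn_preimage {V : Type*} [TopologicalSpace V] (P : V → Prop) (W : Set V)
    (hW : ∀ z ∈ W, P z) [ContractibleSpace W] :
    IsSimplyConnected ((Subtype.val : {z // P z} → V) ⁻¹' W) := by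
  let e : ((Subtype.val : {z // P z} → V) ⁻¹' W) ≃ₜ W :=
    { toFun := fun z => ⟨z.1.1, z.2⟩
      invFun := fun w => ⟨⟨w.1, hW _ w.2⟩, w.2⟩
      left_inv := fun _ => rfl
      right_inv := fun _ => rfl
      continuous_toFun := by fun_prop
      continuous_invFun := by fun_prop }
  have := e.contractibleSpace
  have h : SimplyConnectedSpace ((Subtype.val : {z // P z} → V) ⁻¹' W) := inferInstance
  exact h

lemma exists_slope (P : Set (ℝ × ℝ)) (hP : P.Finite) :
    ∃ ε : ℝ, Set.InjOn (fun z : ℝ × ℝ => z.1 + ε * z.2) P := by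
  have hbad : (⋃ a ∈ P, ⋃ b ∈ P, {ε : ℝ | a ≠ b ∧ a.1 + ε * a.2 = b.1 + ε * b.2}).Finite := by
    refine hP.biUnion fun a _ => hP.biUnion fun b _ => Set.Subsingleton.finite ?_
    rintro ε ⟨hab, h⟩ ε' ⟨-, h'⟩
    have h3 : (ε - ε') * (a.2 - b.2) = 0 := by linear_combination h - h'
    rcases mul_eq_zero.1 h3 with h4 | h4
    · linarith
    · exfalso
      apply hab
      have h5 : a.2 = b.2 := by linarith
      rw [h5] at h
      exact Prod.ext (by linarith) h5
  obtain ⟨ε, hε⟩ := hbad.exists_notMem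
  refine ⟨ε, fun a ha b hb h => ?_⟩
  by_contra hab
  apply hε
  simp only [Set.mem_iUnion]
  exact ⟨a, ha, b, hb, hab, h⟩

lemma exists_two_ne {α : Type*} {a b c : α} (hab : a ≠ b) (hac : a ≠ c) (hbc : b ≠ c) (x : α) :
    (a ≠ x ∧ b ≠ x) ∨ (a ≠ x ∧ c ≠ x) ∨ (b ≠ x ∧ c ≠ x) := by
  grind

theorem pi1_plane (Q : Set (ℝ × ℝ)) (hQ : Q.Finite) (hQ2 : Q.Nontrivial)
    (x₀ : {z : ℝ × ℝ // z ∉ Q}) (γ : FundamentalGroup {z : ℝ × ℝ // z ∉ Q} x₀)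
    (k : ℕ) (hk : 1 ≤ k) (hγ : ∀ δ, γ ^ k * δ = δ * γ ^ k) : γ = 1 := by
  obtain ⟨ε, hε⟩ := exists_slope (insert x₀.1 Q) (hQ.insert _)
  obtain ⟨l, hl⟩ : ∃ l : ℝ × ℝ → ℝ, l = fun z => z.1 + ε * z.2 := ⟨_, rfl⟩
  have hlc : Continuous l := by rw [hl]; fun_prop
  have hinj : ∀ a ∈ Q, ∀ b ∈ Q, l a = l b → a = b := by
    intro a ha b hb h
    rw [hl] at h
    exact hε (Or.inr ha) (Or.inr hb) h
  have hx₀ : ∀ q ∈ Q, l x₀.1 ≠ l q := by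
    intro q hq h
    rw [hl] at h
    have := hε (Or.inl rfl) (Or.inr hq) h
    exact x₀.2 (this ▸ hq)
  have hlcomb : ∀ (a b : ℝ × ℝ) (s : ℝ), l ((1 - s) • a + s • b) = (1 - s) * l a + s * l b := by
    intro a b s
    simp [hl]; ring
  let σ : Bool → ℝ := fun i => if i then 1 else -1
  have hσ : ∀ i, σ i * σ i = 1 := by intro i; cases i <;> simp [σ]
  let W : Bool → Set (ℝ × ℝ) := fun i => {z | ∀ q ∈ Q, l z = l q → 0 < σ i * (z.2 - q.2)}
  have hWQ : ∀ i, ∀ z ∈ W i, z ∉ Q := by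
    intro i z hz hzQ
    have := hz z hzQ rfl
    simp at this
  obtain ⟨C, hC⟩ : ∃ C : ℝ, ∀ q ∈ Q, |q.2| < C := by
    obtain ⟨C, hC⟩ := (hQ.image fun q => |q.2|).bddAbove
    exact ⟨C + 1, fun q hq => by
      have := hC ⟨q, hq, rfl⟩
      simp only at this
      linarith⟩
  have hC' : ∀ i, ∀ q ∈ Q, σ i * q.2 < C := by
    intro i q hq
    have := abs_lt.1 (hC q hq)
    cases i <;> simp [σ] <;> linarith
  have hcontr : ∀ i, ContractibleSpace (W i) := by
    intro i
    have hmax : ∀ y : ℝ, σ i * (σ i * max (σ i * y) C) = max (σ i * y) C := by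
      intro y; rw [← mul_assoc, hσ, one_mul]
    refine contr_of_push (W i)
      (fun z => (l z - ε * (σ i * max (σ i * z.2) C), σ i * max (σ i * z.2) C)) (by fun_prop)
      (0, σ i * C) ?_ ?_ ?_
    · intro z hz s hs0 hs1 q hq h
      rw [hlcomb] at h
      have e1 : l (l z - ε * (σ i * max (σ i * z.2) C), σ i * max (σ i * z.2) C) = l z := by
        simp [hl]
      rw [e1] at h
      have h2 := hz q hq (by linarith)
      have h3 := hmax z.2
      have h4 : σ i * z.2 ≤ max (σ i * z.2) C := le_max_left _ _
      simp only [Prod.snd_add, Prod.smul_snd, smul_eq_mul]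
      have e2 : σ i * ((1 - s) * z.2 + s * (σ i * max (σ i * z.2) C) - q.2) =
        σ i * (z.2 - q.2) + s * (max (σ i * z.2) C - σ i * z.2) := by
        linear_combination s * h3
      rw [e2]
      have : 0 ≤ s * (max (σ i * z.2) C - σ i * z.2) := mul_nonneg hs0 (by linarith)
      linarith
    · intro z hz s hs0 hs1 q hq h
      have h3 := hmax z.2
      have h4 : C ≤ max (σ i * z.2) C := le_max_right _ _
      simp only [Prod.snd_add, Prod.smul_snd, smul_eq_mul]
      have e2 : σ i * ((1 - s) * (σ i * max (σ i * z.2) C) + s * (σ i * C) - q.2) =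
        (1 - s) * (max (σ i * z.2) C - C) + (C - σ i * q.2) := by
        linear_combination (1 - s) * h3 + s * C * hσ i
      rw [e2]
      have : 0 ≤ (1 - s) * (max (σ i * z.2) C - C) := mul_nonneg (by linarith) (by linarith)
      have := hC' i q hq
      linarith
    · intro q hq _
      have := hC' i q hq
      have e2 : σ i * (σ i * C - q.2) = C - σ i * q.2 := by linear_combination C * hσ i
      simp only [e2]
      linarith
  have hWo : ∀ i, IsOpen (W i) := by
    intro i
    have : W i = ⋂ q ∈ Q, ({z | l z ≠ l q} ∪ {z | 0 < σ i * (z.2 - q.2)}) := by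
      ext z
      simp only [W, Set.mem_ofPred_eq, Set.mem_iInter, Set.mem_union]
      exact forall₂_congr fun q hq => by tauto
    rw [this]
    refine hQ.isOpen_biInter fun q _ => IsOpen.union ?_ ?_
    · exact isOpen_ne_fun hlc continuous_const
    · exact isOpen_lt continuous_const (by fun_prop)
  let S : Bool → Set {z : ℝ × ℝ // z ∉ Q} := fun i => Subtype.val ⁻¹' (W i)
  have hboth : ∀ z : {z : ℝ × ℝ // z ∉ Q}, (∀ i, z ∈ S i) ↔ ∀ q ∈ Q, l z.1 ≠ l q := by
    intro z
    constructor
    · intro h q hq hlq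
      have h1 := h true q hq hlq
      have h2 := h false q hq hlq
      simp [σ] at h1 h2
      linarith
    · intro h i q hq hlq
      exact absurd hlq (h q hq)
  let N : {z : ℝ × ℝ // z ∉ Q} → Set (ℝ × ℝ) := fun z => {q | q ∈ Q ∧ l q < l z.1}
  -- points with a prescribed value of `l`
  have hpt : ∀ c : ℝ, (∀ q ∈ Q, c ≠ l q) → ∃ z : {z : ℝ × ℝ // z ∉ Q}, l z.1 = c := by
    intro c hc
    have e : l (c, 0) = c := by simp [hl]
    exact ⟨⟨(c, 0), fun h => hc _ h e.symm⟩, e⟩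
  have hlQ : (l '' Q).Finite := hQ.image l
  obtain ⟨m, hm⟩ := hlQ.bddBelow
  obtain ⟨M, hM⟩ := hlQ.bddAbove
  have hm' : ∀ q ∈ Q, m ≤ l q := fun q hq => hm ⟨q, hq, rfl⟩
  have hM' : ∀ q ∈ Q, l q ≤ M := fun q hq => hM ⟨q, hq, rfl⟩
  obtain ⟨q₁, hq₁, q₂, hq₂, hlt⟩ : ∃ q₁ ∈ Q, ∃ q₂ ∈ Q, l q₁ < l q₂ := by
    obtain ⟨a, ha, b, hb, hab⟩ := hQ2
    rcases lt_trichotomy (l a) (l b) with h | h | h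
    · exact ⟨a, ha, b, hb, h⟩
    · exact absurd (hinj a ha b hb h) hab
    · exact ⟨b, hb, a, ha, h⟩
  obtain ⟨c, hc⟩ : ((Set.Ioo (l q₁) (l q₂)) \ (l '' Q)).Nonempty :=
    ((Set.Ioo_infinite hlt).sdiff hlQ).nonempty
  obtain ⟨za, hza⟩ := hpt (m - 1) (fun q hq => by have := hm' q hq; intro h; linarith)
  obtain ⟨zb, hzb⟩ := hpt (M + 1) (fun q hq => by have := hM' q hq; intro h; linarith)
  obtain ⟨zc, hzc⟩ := hpt c (fun q hq h => hc.2 ⟨q, hq, h.symm⟩)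
  have hzaS : ∀ i, za ∈ S i := (hboth za).2 fun q hq => by
    have := hm' q hq; rw [hza]; intro h; linarith
  have hzbS : ∀ i, zb ∈ S i := (hboth zb).2 fun q hq => by
    have := hM' q hq; rw [hzb]; intro h; linarith
  have hzcS : ∀ i, zc ∈ S i := (hboth zc).2 fun q hq => by
    rw [hzc]; intro h; exact hc.2 ⟨q, hq, h.symm⟩
  have a1 : q₁ ∉ N za := fun h => by
    have := h.2; have := hm' q₁ hq₁; linarith
  have a2 : q₂ ∉ N za := fun h => by
    have := h.2; have := hm' q₂ hq₂; linarith
  have b1 : q₁ ∈ N zb := ⟨hq₁, by rw [hzb]; have := hM' q₁ hq₁; linarith⟩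
  have b2 : q₂ ∈ N zb := ⟨hq₂, by rw [hzb]; have := hM' q₂ hq₂; linarith⟩
  have c1 : q₁ ∈ N zc := ⟨hq₁, by rw [hzc]; exact hc.1.1⟩
  have c2 : q₂ ∉ N zc := fun h => by
    have h3 := h.2; rw [hzc] at h3; have := hc.1.2; linarith
  have hab : N za ≠ N zb := fun h => a1 (h ▸ b1)
  have hac : N za ≠ N zc := fun h => a1 (h ▸ c1)
  have hbc : N zb ≠ N zc := fun h => c2 (h ▸ b2)
  have main := fun z₁ z₂ hz₁ hz₂ h10 h20 h12 =>
    pi1_star S (fun i => (hWo i).preimage continuous_subtype_val)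
    (fun i => @simplyConn_preimage _ _ _ (W i) (hWQ i) (hcontr i)) (by
      intro z
      by_contra hcon
      push Not at hcon
      have h1 := hcon true
      have h2 := hcon false
      simp only [S, W, Set.mem_preimage, Set.mem_ofPred_eq, σ] at h1 h2
      push Not at h1 h2
      obtain ⟨q, hq, hzq, h1⟩ := h1
      obtain ⟨q', hq', hzq', h2⟩ := h2
      have : q' = q := hinj q' hq' q hq (by rw [← hzq, ← hzq'])
      subst this
      simp at h1 h2
      have h3 : z.1.2 = q'.2 := le_antisymm h1 h2
      apply z.2
      have : z.1 = q' := by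
        refine Prod.ext ?_ h3
        simp only [hl, h3] at hzq
        linarith
      rw [this]; exact hq) (x₀ := x₀) ((hboth x₀).2 hx₀) N (by
      intro z hz
      have hz' := (hboth z).1 hz
      have : ∀ᶠ z' in nhds z, ∀ q ∈ Q, (l q < l z'.1 ↔ l q < l z.1) := by
        rw [hQ.eventually_all]
        intro q hq
        have hcont : Continuous fun z' : {z : ℝ × ℝ // z ∉ Q} => l z'.1 :=
          hlc.comp continuous_subtype_val
        rcases lt_or_gt_of_ne (hz' q hq) with h | h
        · filter_upwards [hcont.continuousAt.eventually (gt_mem_nhds h)] with z' hz'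
          constructor <;> intro h' <;> linarith
        · filter_upwards [hcont.continuousAt.eventually (lt_mem_nhds h)] with z' hz'
          constructor <;> intro h' <;> linarith
      filter_upwards [this] with z' hz'
      ext q
      exact and_congr_right (hz' q)) (by
      intro z z' hz hz' hN
      have hz1 := (hboth z).1 hz
      have hz1' := (hboth z').1 hz'
      have key : ∀ t : unitInterval, ∀ q ∈ Q, l ((1 - t.1) • z.1 + t.1 • z'.1) ≠ l q := by
        intro t q hq h
        rw [hlcomb] at h
        have ht0 := t.2.1
        have ht1 := t.2.2
        have hNq : l q < l z.1 ↔ l q < l z'.1 := by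
          have : q ∈ N z ↔ q ∈ N z' := by rw [hN]
          simpa [N, hq] using this
        rcases lt_or_gt_of_ne (hz1 q hq) with h1 | h1
        · have h2 : l z'.1 < l q := by
            rcases lt_or_gt_of_ne (hz1' q hq) with h2 | h2
            · exact h2
            · have := hNq.2 h2; linarith
          rcases eq_or_lt_of_le ht0 with h0 | h0
          · rw [← h0] at h; linarith
          · nlinarith
        · have h2 := hNq.1 h1
          rcases eq_or_lt_of_le ht0 with h0 | h0
          · rw [← h0] at h; linarith
          · nlinarith
      refine ⟨⟨⟨fun t => ⟨(1 - t.1) • z.1 + t.1 • z'.1, fun h => key t _ h rfl⟩, by fun_prop⟩,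
        by ext1; simp, by ext1; simp⟩, ?_⟩
      intro i t
      exact (hboth _).2 (key t) i) z₁ z₂ hz₁ hz₂ h10 h20 h12 γ k hk hγ
  rcases exists_two_ne hab hac hbc (N x₀) with h | h | h
  · exact main za zb hzaS hzbS h.1 h.2 hab
  · exact main za zc hzaS hzcS h.1 h.2 hac
  · exact main zb zc hzbS hzcS h.1 h.2 hbc

end Plane


section LoopNull

lemma contractible_square : ContractibleSpace (unitInterval × unitInterval) := by
  refine (contractible_iff_id_nullhomotopic _).2 ⟨(0, 0), ⟨⟨⟨fun p =>
    (unitInterval.symm p.1 * p.2.1, unitInterval.symm p.1 * p.2.2), by fun_prop⟩, ?_, ?_⟩⟩⟩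
  · intro x; simp
  · intro x; simp

lemma square_comm {X : Type*} [TopologicalSpace X] (h : unitInterval × X → X) (hc : Continuous h)
    (h0 : ∀ x, h (0, x) = x) {x₀ : X} (γ : Path x₀ x₀) (hγ : ∀ t, γ t = h (t, x₀))
    (δ δ' : Path x₀ x₀) (hδ : ∀ s, δ' s = h (1, δ s)) :
    (FundamentalGroup.fromPath (.mk γ)) * FundamentalGroup.fromPath (.mk δ) =
      FundamentalGroup.fromPath (.mk δ') * FundamentalGroup.fromPath (.mk γ) := by
  rw [FundamentalGroup.mul_def, FundamentalGroup.mul_def]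
  change (Path.Homotopic.Quotient.mk δ).trans (.mk γ) =
    (Path.Homotopic.Quotient.mk γ).trans (.mk δ')
  rw [← Path.Homotopic.Quotient.mk_trans, ← Path.Homotopic.Quotient.mk_trans]
  apply Path.Homotopic.Quotient.eq.mpr
  let G : C(unitInterval × unitInterval, X) := ⟨fun p => h (p.1, δ p.2), by fun_prop⟩
  have hG0 : ∀ s, G (0, s) = δ s := fun s => h0 _
  have hG1 : ∀ t, G (t, 1) = γ t := fun t => by simp [G, hγ]
  have hG2 : ∀ t, G (t, 0) = γ t := fun t => by simp [G, hγ]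
  have hG3 : ∀ s, G (1, s) = δ' s := fun s => by simp [G, hδ]
  let v0 : Path ((0, 0) : unitInterval × unitInterval) (0, 1) :=
    ⟨⟨fun s => (0, s), by fun_prop⟩, rfl, rfl⟩
  let v1 : Path ((1, 0) : unitInterval × unitInterval) (1, 1) :=
    ⟨⟨fun s => (1, s), by fun_prop⟩, rfl, rfl⟩
  let w0 : Path ((0, 0) : unitInterval × unitInterval) (1, 0) :=
    ⟨⟨fun s => (s, 0), by fun_prop⟩, rfl, rfl⟩
  let w1 : Path ((0, 1) : unitInterval × unitInterval) (1, 1) :=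
    ⟨⟨fun s => (s, 1), by fun_prop⟩, rfl, rfl⟩
  have := contractible_square
  have hh : (v0.trans w1).Homotopic (w0.trans v1) := SimplyConnectedSpace.paths_homotopic _ _
  obtain ⟨K⟩ := hh.map G
  have e0 : x₀ = G (0, 0) := by rw [hG0]; simp
  have e1 : x₀ = G (1, 1) := by rw [hG1]; simp
  have a1 : ((v0.trans w1).map G.continuous).cast e0 e1 = δ.trans γ := by
    ext t
    simp only [Path.cast_coe, Path.map_coe, Function.comp, Path.trans_apply]
    split_ifs
    · exact hG0 _
    · exact hG1 _
  have a2 : ((w0.trans v1).map G.continuous).cast e0 e1 = γ.trans δ' := by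
    ext t
    simp only [Path.cast_coe, Path.map_coe, Function.comp, Path.trans_apply]
    split_ifs
    · exact hG2 _
    · exact hG3 _
  rw [← a1, ← a2]
  exact ⟨K.cast rfl rfl⟩

/-- the main topological input: the trace loop is null homotopic in the complement -/
theorem loop_null (P : Set (ℝ × ℝ)) (hPf : ∀ R : ℝ, (P ∩ Metric.closedBall 0 R).Finite)
    (hP2 : P.Nontrivial) (H K : unitInterval × (ℝ × ℝ) → ℝ × ℝ) (hH : Continuous H)
    (hK : Continuous K) (hH0 : ∀ z, H (0, z) = z) (hK0 : ∀ z, K (0, z) = z)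
    (hHi : ∀ t z z', H (t, z) = H (t, z') → z = z')
    (hKi : ∀ t z z', K (t, z) = K (t, z') → z = z')
    (hHP : ∀ t, ∀ z ∈ P, H (t, z) = z) (hKP : ∀ t, ∀ z ∈ P, K (t, z) = z)
    (k : ℕ) (hk : 1 ≤ k) (hHK : ∀ z, (fun z => H (1, z))^[k] z = K (1, z))
    (x : ℝ × ℝ) (hx : x ∉ P) (hHx : H (1, x) = x) (hKx : ∀ t, K (t, x) = x) :
    ∃ Γ : unitInterval × unitInterval → ℝ × ℝ, Continuous Γ ∧ (∀ p, Γ p ∉ P) ∧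
      (∀ t, Γ (0, t) = H (t, x)) ∧ (∀ t, Γ (1, t) = x) ∧ (∀ s, Γ (s, 0) = x) ∧
      ∀ s, Γ (s, 1) = x := by
  -- choice of the radius
  obtain ⟨q₁, hq₁, q₂, hq₂, hq⟩ := hP2
  obtain ⟨B, hB⟩ : ∃ B : ℝ, ∀ t : unitInterval, ‖H (t, x)‖ ≤ B := by
    have : IsCompact (Set.range fun t : unitInterval => ‖H (t, x)‖) :=
      isCompact_range (by fun_prop)
    obtain ⟨B, hB⟩ := this.bddAbove
    exact ⟨B, fun t => hB ⟨t, rfl⟩⟩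
  obtain ⟨R₀, hR₀⟩ : ∃ R₀ : ℝ, R₀ = max (max ‖q₁‖ ‖q₂‖) B := ⟨_, rfl⟩
  have hR1 : ‖q₁‖ ≤ R₀ := by rw [hR₀]; exact (le_max_left _ _).trans (le_max_left _ _)
  have hR2 : ‖q₂‖ ≤ R₀ := by rw [hR₀]; exact (le_max_right _ _).trans (le_max_left _ _)
  have hR3 : B ≤ R₀ := by rw [hR₀]; exact le_max_right _ _
  obtain ⟨R, ⟨hRl, hRu⟩, hRn⟩ :
      (Set.Ioo R₀ (R₀ + 1) \ (norm '' (P ∩ Metric.closedBall 0 (R₀ + 1)))).Nonempty :=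
    ((Set.Ioo_infinite (by linarith)).sdiff ((hPf _).image _)).nonempty
  have hRpos : 0 < R := lt_of_le_of_lt ((norm_nonneg _).trans hR1) hRl
  have hRP : ∀ z ∈ P, ‖z‖ ≠ R := by
    intro z hz h
    exact hRn ⟨z, ⟨hz, by simp [h, hRu.le]⟩, h⟩
  let Q := P ∩ Metric.closedBall 0 R
  have hQf : Q.Finite := hPf R
  have hQ2 : Q.Nontrivial :=
    ⟨q₁, ⟨hq₁, by simp; linarith⟩, q₂, ⟨hq₂, by simp; linarith⟩, hq⟩
  have hxQ : x ∉ Q := fun h => hx h.1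
  let x₀ : {z : ℝ × ℝ // z ∉ Q} := ⟨x, hxQ⟩
  let h : unitInterval × {z : ℝ × ℝ // z ∉ Q} → {z : ℝ × ℝ // z ∉ Q} := fun p =>
    ⟨H (p.1, p.2.1), fun hq => p.2.2 (by
      have := hHP p.1 _ hq.1
      have := hHi _ _ _ this
      rwa [this] at hq)⟩
  let κ : unitInterval × {z : ℝ × ℝ // z ∉ Q} → {z : ℝ × ℝ // z ∉ Q} := fun p =>
    ⟨K (p.1, p.2.1), fun hq => p.2.2 (by
      have := hKP p.1 _ hq.1
      have := hKi _ _ _ this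
      rwa [this] at hq)⟩
  have hhc : Continuous h := by fun_prop
  have hκc : Continuous κ := by fun_prop
  let γ : Path x₀ x₀ := ⟨⟨fun t => h (t, x₀), by fun_prop⟩, Subtype.ext (hH0 x), Subtype.ext hHx⟩
  let fm : Path x₀ x₀ → Path x₀ x₀ := fun δ => ⟨⟨fun s => h (1, δ s), by fun_prop⟩,
    by simpa using Subtype.ext hHx, by simpa using Subtype.ext hHx⟩
  have hfm : ∀ n δ s, (fm^[n] δ s).1 = (fun z => H (1, z))^[n] (δ s).1 := by
    intro n
    induction n with
    | zero => intro δ s; rfl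
    | succ n ih => intro δ s; rw [Function.iterate_succ_apply, Function.iterate_succ_apply, ih]; rfl
  have hconj : ∀ n δ, (FundamentalGroup.fromPath (.mk γ)) ^ n * FundamentalGroup.fromPath (.mk δ) =
      FundamentalGroup.fromPath (.mk (fm^[n] δ)) * (FundamentalGroup.fromPath (.mk γ)) ^ n := by
    intro n
    induction n with
    | zero => intro δ; simp
    | succ n ih =>
      intro δ
      rw [pow_succ, mul_assoc, square_comm h hhc (fun z => Subtype.ext (hH0 z.1)) γ (fun _ => rfl)
        δ (fm δ) (fun _ => rfl), ← mul_assoc, ih, mul_assoc]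
      rfl
  have hKc : ∀ δ, (FundamentalGroup.fromPath (.mk (fm^[k] δ))) =
      FundamentalGroup.fromPath (.mk δ) := by
    intro δ
    have := square_comm κ hκc (fun z => Subtype.ext (hK0 z.1)) (Path.refl x₀)
      (fun t => Subtype.ext (hKx t).symm) δ (fm^[k] δ) (fun s => Subtype.ext (by
        rw [hfm, hHK]))
    have h1 : FundamentalGroup.fromPath (.mk (Path.refl x₀)) = 1 := rfl
    rw [h1, one_mul, mul_one] at this
    exact this.symm
  have hγ1 : FundamentalGroup.fromPath (.mk γ) = 1 := by
    refine pi1_plane Q hQf hQ2 x₀ _ k hk fun δ => ?_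
    obtain ⟨δ, rfl⟩ := Path.Homotopic.Quotient.mk_surjective δ
    have := hconj k δ
    rw [hKc] at this
    exact this
  obtain ⟨F⟩ : γ.Homotopic (Path.refl x₀) := Path.Homotopic.Quotient.eq.mp hγ1
  let r : ℝ × ℝ → ℝ × ℝ := fun z => (R / max R ‖z‖) • z
  have hrc : Continuous r := by
    have hm : Continuous fun z : ℝ × ℝ => max R ‖z‖ := by fun_prop
    refine Continuous.smul (Continuous.div continuous_const hm ?_) continuous_id
    intro z
    exact (lt_of_lt_of_le hRpos (le_max_left _ _)).ne'
  have hr1 : ∀ z, ‖z‖ ≤ R → r z = z := by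
    intro z hz
    simp only [r]
    rw [max_eq_left hz, div_self hRpos.ne', one_smul]
  have hr2 : ∀ z, R < ‖z‖ → ‖r z‖ = R := by
    intro z hz
    simp only [r]
    rw [max_eq_right hz.le, norm_smul, norm_div, norm_norm, Real.norm_of_nonneg hRpos.le,
      div_mul_cancel₀ _ (hRpos.trans hz).ne']
  have hxR : ‖x‖ ≤ R := by
    have := hB 0
    rw [hH0] at this
    linarith
  refine ⟨fun p => r (F p).1, by fun_prop, ?_, ?_, ?_, ?_, ?_⟩
  · intro p hp
    change r (F p).1 ∈ P at hp
    rcases le_or_gt ‖(F p).1‖ R with h | h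
    · rw [hr1 _ h] at hp
      exact (F p).2 ⟨hp, by simpa using h⟩
    · exact hRP _ hp (hr2 _ h)
  · intro t
    have : F (0, t) = γ t := F.apply_zero t
    simp only [this]
    exact hr1 _ ((hB t).trans (by linarith))
  · intro t
    have : F (1, t) = x₀ := F.apply_one t
    simp only [this]
    exact hr1 _ hxR
  · intro s
    have : F (s, 0) = x₀ := F.source s
    simp only [this]
    exact hr1 _ hxR
  · intro s
    have : F (s, 1) = x₀ := F.target s
    simp only [this]
    exact hr1 _ hxR

end LoopNull


section Torus

/-- the 2-torus -/
abbrev Torus2 : Type := AddCircle (1 : ℝ) × AddCircle (1 : ℝ)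

/-- the universal covering projection, as a group homomorphism -/
def tpr : ℝ × ℝ →+ Torus2 where
  toFun z := ((z.1 : AddCircle (1 : ℝ)), (z.2 : AddCircle (1 : ℝ)))
  map_zero' := rfl
  map_add' _ _ := rfl

lemma tpr_apply (z : ℝ × ℝ) :
    tpr z = ((z.1 : AddCircle (1 : ℝ)), (z.2 : AddCircle (1 : ℝ))) := rfl

lemma continuous_tpr : Continuous tpr := by
  have h : Continuous ((↑) : ℝ → AddCircle (1 : ℝ)) := AddCircle.continuous_mk' 1
  exact (h.comp continuous_fst).prodMk (h.comp continuous_snd)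

lemma tpr_surjective (x : Torus2) : ∃ z, tpr z = x := by
  obtain ⟨a, b⟩ := x
  obtain ⟨a, rfl⟩ := QuotientAddGroup.mk_surjective a
  obtain ⟨b, rfl⟩ := QuotientAddGroup.mk_surjective b
  exact ⟨(a, b), rfl⟩

lemma norm_tpr_le (z : ℝ × ℝ) : ‖tpr z‖ ≤ ‖z‖ := by
  rw [tpr_apply, Prod.norm_def, Prod.norm_def]
  exact max_le_max QuotientAddGroup.norm_mk_le_norm QuotientAddGroup.norm_mk_le_norm

lemma tpr_lift_unique {A : Type*} [TopologicalSpace A] [PreconnectedSpace A] {g h : A → ℝ × ℝ}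
    (hg : Continuous g) (hh : Continuous h) (he : ∀ a, tpr (g a) = tpr (h a)) (a : A)
    (ha : g a = h a) : ∀ b, g b = h b := by
  have cov := AddCircle.isCoveringMap_coe (1 : ℝ)
  have h1 : (fun a => (g a).1) = fun a => (h a).1 :=
    cov.eq_of_comp_eq (by fun_prop) (by fun_prop) (funext fun b => congrArg Prod.fst (he b)) a
      (congrArg Prod.fst ha)
  have h2 : (fun a => (g a).2) = fun a => (h a).2 :=
    cov.eq_of_comp_eq (by fun_prop) (by fun_prop) (funext fun b => congrArg Prod.snd (he b)) a
      (congrArg Prod.snd ha)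
  intro b
  exact Prod.ext (congrFun h1 b) (congrFun h2 b)

/-- lifting the displacement of a homotopy starting at the identity -/
lemma exists_disp (H : unitInterval × Torus2 → Torus2) (hH : Continuous H)
    (H0 : ∀ x, H (0, x) = x) :
    ∃ u : unitInterval × Torus2 → ℝ × ℝ, Continuous u ∧ (∀ x, u (0, x) = 0) ∧
      (∀ t x, H (t, x) = x + tpr (u (t, x))) ∧
      ∀ x, (∀ t, H (t, x) = x) → ∀ t, u (t, x) = 0 := by
  have cov := AddCircle.isCoveringMap_coe (1 : ℝ)
  let D1 : C(unitInterval × Torus2, AddCircle (1 : ℝ)) := ⟨fun p => (H p - p.2).1, by fun_prop⟩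
  let D2 : C(unitInterval × Torus2, AddCircle (1 : ℝ)) := ⟨fun p => (H p - p.2).2, by fun_prop⟩
  have z1 : ∀ a, D1 (0, a) = ((ContinuousMap.const Torus2 (0 : ℝ) a : ℝ) : AddCircle (1 : ℝ)) := by
    intro a; simp [D1, H0]
  have z2 : ∀ a, D2 (0, a) = ((ContinuousMap.const Torus2 (0 : ℝ) a : ℝ) : AddCircle (1 : ℝ)) := by
    intro a; simp [D2, H0]
  let L1 := cov.liftHomotopy D1 (ContinuousMap.const _ 0) z1
  let L2 := cov.liftHomotopy D2 (ContinuousMap.const _ 0) z2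
  have l1 : ∀ p, ((L1 p : ℝ) : AddCircle (1 : ℝ)) = (H p - p.2).1 := fun p =>
    congrFun (cov.liftHomotopy_lifts D1 (ContinuousMap.const _ 0) z1) p
  have l2 : ∀ p, ((L2 p : ℝ) : AddCircle (1 : ℝ)) = (H p - p.2).2 := fun p =>
    congrFun (cov.liftHomotopy_lifts D2 (ContinuousMap.const _ 0) z2) p
  have k1 : ∀ a, L1 (0, a) = 0 := fun a => cov.liftHomotopy_zero D1 (ContinuousMap.const _ 0) z1 a
  have k2 : ∀ a, L2 (0, a) = 0 := fun a => cov.liftHomotopy_zero D2 (ContinuousMap.const _ 0) z2 a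
  have hl : ∀ p, tpr (L1 p, L2 p) = H p - p.2 := fun p => Prod.ext (l1 p) (l2 p)
  have hu0 : ∀ x, ((L1 (0, x), L2 (0, x)) : ℝ × ℝ) = 0 := fun x => Prod.ext (k1 x) (k2 x)
  refine ⟨fun p => (L1 p, L2 p), by fun_prop, hu0, ?_, ?_⟩
  · intro t x
    rw [hl]; simp
  · intro x hx
    refine tpr_lift_unique (g := fun t => (L1 (t, x), L2 (t, x))) (h := fun _ => 0) (by fun_prop)
      (by fun_prop) (fun t => ?_) 0 (hu0 x)
    rw [hl, map_zero, hx, sub_self]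

lemma finite_coe_fiber (a : AddCircle (1 : ℝ)) (R : ℝ) :
    {t : ℝ | (t : AddCircle (1 : ℝ)) = a ∧ |t| ≤ R}.Finite := by
  obtain ⟨a, rfl⟩ := QuotientAddGroup.mk_surjective a
  obtain ⟨M, hM⟩ := exists_nat_ge (R + |a|)
  refine ((Set.finite_Icc (-(M : ℤ)) M).image fun m : ℤ => a + m).subset ?_
  rintro t ⟨h, hR⟩
  have h1 : ((t - a : ℝ) : AddCircle (1 : ℝ)) = 0 := by
    rw [AddCircle.coe_sub, sub_eq_zero]; exact h
  obtain ⟨n, hn⟩ := (AddCircle.coe_eq_zero_iff 1).1 h1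
  have hn' : (n : ℝ) = t - a := by simpa using hn
  have h2 : |(n : ℝ)| ≤ M := by
    rw [hn']; exact (abs_sub _ _).trans (by linarith)
  have h3 := abs_le.1 h2
  refine ⟨n, ⟨?_, ?_⟩, ?_⟩
  · exact_mod_cast h3.1
  · exact_mod_cast h3.2
  · simp only [hn']; ring

lemma finite_tpr_preimage (A : Set Torus2) (hA : A.Finite) (R : ℝ) :
    (tpr ⁻¹' A ∩ Metric.closedBall 0 R).Finite := by
  have : tpr ⁻¹' A ∩ Metric.closedBall 0 R ⊆ ⋃ a ∈ A,
      {t : ℝ | (t : AddCircle (1 : ℝ)) = a.1 ∧ |t| ≤ R} ×ˢ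
      {t : ℝ | (t : AddCircle (1 : ℝ)) = a.2 ∧ |t| ≤ R} := by
    rintro z ⟨hz, hR⟩
    have hR' : ‖z‖ ≤ R := by simpa using hR
    simp only [Set.mem_iUnion]
    exact ⟨tpr z, hz, ⟨rfl, (norm_fst_le z).trans hR'⟩, ⟨rfl, (norm_snd_le z).trans hR'⟩⟩
  exact (hA.biUnion fun a _ => (finite_coe_fiber _ _).prod (finite_coe_fiber _ _)).subset this

/-- isotopy relative to `A` from the identity to `f` with prescribed trace of `x` -/
def TraceIso (f : Torus2 → Torus2) (A : Set Torus2) (x : Torus2) (c : unitInterval → ℝ × ℝ) :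
    Prop :=
  ∃ H : unitInterval × Torus2 → Torus2, Continuous H ∧
    (∀ t : unitInterval, IsHomeomorph fun x => H (t, x)) ∧
    (∀ x, H (0, x) = x) ∧ (∀ x, H (1, x) = f x) ∧
    (∀ t : unitInterval, ∀ x ∈ A, H (t, x) = x) ∧ ∀ t, H (t, x) = tpr (c t)

lemma push_homeo (ε : ℝ) (hε : 0 < ε) (y : Torus2) (v : ℝ × ℝ) (hv : ‖v‖ < ε) :
    IsHomeomorph fun z : Torus2 => z + tpr ((max 0 (1 - dist z y / ε)) • v) := by
  have hlip : ∀ z w : Torus2, dist (tpr ((max 0 (1 - dist z y / ε)) • v))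
      (tpr ((max 0 (1 - dist w y / ε)) • v)) ≤ ‖v‖ / ε * dist z w := by
    intro z w
    rw [dist_eq_norm, ← map_sub, ← sub_smul]
    refine (norm_tpr_le _).trans ?_
    rw [norm_smul]
    have h1 : ‖max 0 (1 - dist z y / ε) - max 0 (1 - dist w y / ε)‖ ≤ dist z w / ε := by
      rw [Real.norm_eq_abs, max_comm 0, max_comm 0]
      refine (abs_max_sub_max_le_abs _ _ _).trans ?_
      have : (1 - dist z y / ε) - (1 - dist w y / ε) = (dist w y - dist z y) / ε := by ring
      rw [this, abs_div, abs_of_pos hε]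
      gcongr
      rw [dist_comm z w]
      exact abs_dist_sub_le w z y
    calc _ ≤ dist z w / ε * ‖v‖ := by gcongr
      _ = _ := by ring
  have hK : ‖v‖ / ε < 1 := (div_lt_one hε).2 hv
  have hK0 : 0 ≤ ‖v‖ / ε := by positivity
  have hcont : Continuous fun z : Torus2 => z + tpr ((max 0 (1 - dist z y / ε)) • v) :=
    continuous_id.add (continuous_tpr.comp (by fun_prop))
  rw [isHomeomorph_iff_continuous_bijective]
  refine ⟨hcont, ?_, ?_⟩
  · intro z w h
    have h1 := hlip z w
    have h2 : dist z w = dist (tpr ((max 0 (1 - dist z y / ε)) • v))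
      (tpr ((max 0 (1 - dist w y / ε)) • v)) := by
      rw [dist_eq_norm, dist_eq_norm, norm_sub_rev]
      congr 1
      simp only at h
      rw [sub_eq_sub_iff_add_eq_add, add_comm (tpr _) z]
      exact h.symm
    rw [← h2] at h1
    have h3 : dist z w ≤ 0 := by nlinarith [dist_nonneg (x := z) (y := w)]
    exact dist_le_zero.1 h3
  · intro w
    have hc : ContractingWith ⟨‖v‖ / ε, hK0⟩
        (fun z : Torus2 => w - tpr ((max 0 (1 - dist z y / ε)) • v)) := by
      refine ⟨by exact_mod_cast hK, LipschitzWith.of_dist_le_mul fun z z' => ?_⟩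
      rw [dist_sub_left]
      exact hlip z z'
    refine ⟨hc.fixedPoint, ?_⟩
    have := hc.fixedPoint_isFixedPt
    rw [Function.IsFixedPt] at this
    exact (sub_eq_iff_eq_add.1 this).symm

lemma push_step (f : Torus2 → Torus2) (A : Set Torus2) (x : Torus2) (c c' : unitInterval → ℝ × ℝ)
    (hc : Continuous c) (hc' : Continuous c') (h0 : c 0 = c' 0) (h1 : c 1 = c' 1)
    (ε : ℝ) (hε : 0 < ε) (hcc : ∀ t, ‖c' t - c t‖ < ε) (hA : ∀ t, ∀ a ∈ A, ε ≤ dist a (tpr (c t)))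
    (hf : TraceIso f A x c) : TraceIso f A x c' := by
  obtain ⟨H, hH, hHh, H0, H1, HA, Hx⟩ := hf
  have hpr := continuous_tpr
  refine ⟨fun p => H p + tpr ((max 0 (1 - dist (H p) (tpr (c p.1)) / ε)) • (c' p.1 - c p.1)),
    by fun_prop, ?_, ?_, ?_, ?_, ?_⟩
  · intro t
    exact (push_homeo ε hε (tpr (c t)) (c' t - c t) (hcc t)).comp (hHh t)
  · intro x
    simp [h0, H0]
  · intro x
    simp [h1, H1]
  · intro t a ha
    have e1 : max 0 (1 - dist a (tpr (c t)) / ε) = 0 := by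
      apply max_eq_left
      have := (one_le_div hε).2 (hA t a ha)
      linarith
    simp [HA t a ha, e1]
  · intro t
    simp [Hx]

lemma push_all (f : Torus2 → Torus2) (A : Set Torus2) (hAf : A.Finite) (hAne : A.Nonempty)
    (x : Torus2) (Γ : unitInterval × unitInterval → ℝ × ℝ) (hΓ : Continuous Γ)
    (hΓA : ∀ p, tpr (Γ p) ∉ A) (xt : ℝ × ℝ) (hΓ0 : ∀ s, Γ (s, 0) = xt) (hΓ1 : ∀ s, Γ (s, 1) = xt)
    (hf : TraceIso f A x fun t => Γ (0, t)) : TraceIso f A x fun t => Γ (1, t) := by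
  obtain ⟨ε, hε, hεA⟩ : ∃ ε > 0, ∀ p, ∀ a ∈ A, ε ≤ dist a (tpr (Γ p)) := by
    have hcont : Continuous fun p => Metric.infDist (tpr (Γ p)) A :=
      (Metric.continuous_infDist_pt A).comp (continuous_tpr.comp hΓ)
    obtain ⟨p₀, -, hp₀⟩ := isCompact_univ.exists_isMinOn Set.univ_nonempty hcont.continuousOn
    refine ⟨Metric.infDist (tpr (Γ p₀)) A, ?_, ?_⟩
    · exact (hAf.isClosed.notMem_iff_infDist_pos hAne).1 (hΓA p₀)
    · intro p a ha
      rw [dist_comm]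
      exact (hp₀ (Set.mem_univ p)).trans (Metric.infDist_le_dist_of_mem ha)
  have huc := CompactSpace.uniformContinuous_of_continuous hΓ
  obtain ⟨δ, hδ, hδΓ⟩ := Metric.uniformContinuous_iff.1 huc ε hε
  refine PreconnectedSpace.induction₂' (fun s s' : unitInterval =>
    TraceIso f A x (fun t => Γ (s, t)) → TraceIso f A x (fun t => Γ (s', t))) ?_
    ⟨fun a b c h1 h2 h => h2 (h1 h)⟩ 0 1 hf
  intro s
  filter_upwards [Metric.ball_mem_nhds s hδ] with s' hs'
  have key : ∀ t, dist (Γ (s', t)) (Γ (s, t)) < ε := by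
    intro t
    apply hδΓ
    rw [Prod.dist_eq]
    exact max_lt hs' (by simpa using hδ)
  constructor
  · refine push_step f A x _ _ (by fun_prop) (by fun_prop) (by simp only [hΓ0])
      (by simp only [hΓ1]) ε hε (fun t => ?_) (fun t => hεA _)
    rw [← dist_eq_norm]; exact key t
  · refine push_step f A x _ _ (by fun_prop) (by fun_prop) (by simp only [hΓ0])
      (by simp only [hΓ1]) ε hε (fun t => ?_) (fun t => hεA _)
    rw [← dist_eq_norm, dist_comm]; exact key t

end Torus


section Final

lemma iso_base (f : Torus2 → Torus2) (h : IsotopicToIdRel f ∅) (x : Torus2) (hx : f x = x) :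
    IsotopicToIdRel f {x} := by
  obtain ⟨H, hH, hHh, H0, H1, -⟩ := h
  refine ⟨fun p => H p - (H (p.1, x) - x), by fun_prop, ?_, ?_, ?_, ?_⟩
  · intro t
    exact (Homeomorph.subRight (H (t, x) - x)).isHomeomorph.comp (hHh t)
  · intro y; simp [H0]
  · intro y; simp [H1, hx]
  · rintro t y rfl
    simp

lemma iso_step (f : Torus2 → Torus2) (A : Set Torus2) (hAf : A.Finite) (hAne : A.Nonempty)
    (x : Torus2) (hxA : x ∉ A) (hx : f x = x) (hA : IsotopicToIdRel f A) (k : ℕ) (hk : 1 ≤ k)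
    (hfk : IsotopicToIdRel f^[k] (insert x A)) : IsotopicToIdRel f (insert x A) := by
  obtain ⟨H, hH, hHh, H0, H1, HA⟩ := hA
  obtain ⟨K, hK, hKh, K0, K1, KA⟩ := hfk
  obtain ⟨u, hu, u0, uH, uA⟩ := exists_disp H hH H0
  obtain ⟨w, hw, w0, wK, wA⟩ := exists_disp K hK K0
  have hpr := continuous_tpr
  -- the lifts
  let H' : unitInterval × (ℝ × ℝ) → ℝ × ℝ := fun p => p.2 + u (p.1, tpr p.2)
  let K' : unitInterval × (ℝ × ℝ) → ℝ × ℝ := fun p => p.2 + w (p.1, tpr p.2)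
  have hH' : Continuous H' := by fun_prop
  have hK' : Continuous K' := by fun_prop
  have lH : ∀ t z, tpr (H' (t, z)) = H (t, tpr z) := fun t z => by
    simp only [H', map_add, uH]
  have lK : ∀ t z, tpr (K' (t, z)) = K (t, tpr z) := fun t z => by
    simp only [K', map_add, wK]
  have iH : ∀ t z z', H' (t, z) = H' (t, z') → z = z' := by
    intro t z z' h
    have h1 : tpr z = tpr z' := (hHh t).injective (by
      change H (t, tpr z) = H (t, tpr z')
      rw [← lH, ← lH, h])
    simp only [H', h1] at h
    exact add_right_cancel h
  have iK : ∀ t z z', K' (t, z) = K' (t, z') → z = z' := by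
    intro t z z' h
    have h1 : tpr z = tpr z' := (hKh t).injective (by
      change K (t, tpr z) = K (t, tpr z')
      rw [← lK, ← lK, h])
    simp only [K', h1] at h
    exact add_right_cancel h
  have fH : ∀ t, ∀ z ∈ tpr ⁻¹' A, H' (t, z) = z := by
    intro t z hz
    simp only [H', uA (tpr z) (fun t => HA t _ hz) t, add_zero]
  have fK' : ∀ t, ∀ z, tpr z ∈ insert x A → K' (t, z) = z := by
    intro t z hz
    simp only [K', wA (tpr z) (fun t => KA t _ hz) t, add_zero]
  have fK : ∀ t, ∀ z ∈ tpr ⁻¹' A, K' (t, z) = z := fun t z hz => fK' t z (Or.inr hz)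
  obtain ⟨a, ha⟩ := hAne
  obtain ⟨a', ha'⟩ := tpr_surjective a
  obtain ⟨x', hx'⟩ := tpr_surjective x
  have ha'A : a' ∈ tpr ⁻¹' A := by rw [Set.mem_preimage, ha']; exact ha
  have lHn : ∀ n z, tpr ((fun z => H' (1, z))^[n] z) = f^[n] (tpr z) := by
    intro n
    induction n with
    | zero => intro z; rfl
    | succ n ih =>
      intro z
      rw [Function.iterate_succ_apply, Function.iterate_succ_apply, ih, lH, H1]
  have hHc1 : Continuous fun z => H' (1, z) := by fun_prop
  have hHK : ∀ z, (fun z => H' (1, z))^[k] z = K' (1, z) := by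
    refine tpr_lift_unique (hHc1.iterate k) (by fun_prop) (fun z => ?_) a' ?_
    · rw [lHn, lK, K1]
    · rw [fK 1 a' ha'A]
      exact Function.iterate_fixed (fH 1 a' ha'A) k
  have hu1 : tpr (u (1, x)) = 0 := by
    have := uH 1 x
    rw [H1, hx] at this
    simpa using this.symm
  have hiter : ∀ n : ℕ, (fun z => H' (1, z))^[n] x' = x' + n • u (1, x) := by
    intro n
    induction n with
    | zero => simp
    | succ n ih =>
      rw [Function.iterate_succ_apply', ih]
      simp only [H', map_add, map_nsmul, hu1, smul_zero, add_zero, hx']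
      rw [succ_nsmul, add_assoc]
  have hu1' : u (1, x) = 0 := by
    have h1 := hiter k
    rw [hHK, fK' 1 x' (by rw [hx']; exact Or.inl rfl)] at h1
    have h2 : k • u (1, x) = 0 := by simpa using h1.symm
    have h3 : (k : ℝ) • u (1, x) = 0 := by rw [Nat.cast_smul_eq_nsmul]; exact h2
    rcases smul_eq_zero.1 h3 with h4 | h4
    · exfalso
      have : k = 0 := by exact_mod_cast h4
      omega
    · exact h4
  have hxA' : x' ∉ tpr ⁻¹' A := by rw [Set.mem_preimage, hx']; exact hxA
  have hnt : (tpr ⁻¹' A).Nontrivial := by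
    refine ⟨a', ha'A, a' + (1, 0), ?_, ?_⟩
    · have : tpr ((1, 0) : ℝ × ℝ) = 0 :=
        Prod.ext (AddCircle.coe_period (1 : ℝ)) rfl
      rw [Set.mem_preimage, map_add, this, add_zero]
      exact ha'A
    · intro h
      have := congrArg Prod.fst h
      simp at this
  obtain ⟨Γ, hΓ, hΓP, hΓ0, hΓ1, hΓs0, hΓs1⟩ := loop_null (tpr ⁻¹' A) (finite_tpr_preimage A hAf) hnt
    H' K' hH' hK' (fun z => by simp only [H', u0, add_zero]) (fun z => by simp only [K', w0, add_zero])
    iH iK fH fK k hk hHK x' hxA' (by simp only [H', hx', hu1', add_zero])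
    (fun t => fK' t x' (by rw [hx']; exact Or.inl rfl))
  have hT : TraceIso f A x fun t => Γ (0, t) :=
    ⟨H, hH, hHh, H0, H1, HA, fun t => by
      show H (t, x) = tpr (Γ (0, t))
      rw [hΓ0, lH, hx']⟩
  obtain ⟨G, hG, hGh, G0, G1, GA, Gx⟩ :=
    push_all f A hAf ⟨a, ha⟩ x Γ hΓ hΓP x' hΓs0 hΓs1 hT
  refine ⟨G, hG, hGh, G0, G1, ?_⟩
  rintro t y (rfl | hy)
  · rw [Gx]
    show tpr (Γ (1, t)) = _
    rw [hΓ1, hx']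
  · exact GA t y hy

end Final

theorem stmt10 (f : AddCircle (1 : ℝ) × AddCircle (1 : ℝ) →
      AddCircle (1 : ℝ) × AddCircle (1 : ℝ))
    (hf : IsHomeomorph f) (hiso : IsotopicToIdRel f ∅)
    (F : Set (AddCircle (1 : ℝ) × AddCircle (1 : ℝ)))
    (hFfix : F ⊆ {x | f x = x}) (hFne : F.Nonempty) (hFfin : F.Finite)
    (k : ℕ) (hk : 1 ≤ k) (hfk : IsotopicToIdRel f^[k] F) :
    IsotopicToIdRel f F := by
  have main : F.Nonempty → IsotopicToIdRel f F := by
    refine Set.Finite.induction_on_subset (motive := fun s _ => s.Nonempty → IsotopicToIdRel f s)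
      F hFfin (fun h => absurd h Set.not_nonempty_empty) ?_
    intro a t ha hts hat ih _
    rcases t.eq_empty_or_nonempty with rfl | hne
    · rw [insert_empty_eq]
      exact iso_base f hiso a (hFfix ha)
    · refine iso_step f t (hFfin.subset hts) hne a hat (hFfix ha) (ih hne) k hk ?_
      obtain ⟨K, h1, h2, h3, h4, h5⟩ := hfk
      exact ⟨K, h1, h2, h3, h4, fun s x hx => h5 s x (Set.insert_subset ha hts hx)⟩
  exact main hFne
end

section
/- Let S² be the unit sphere in ℝ³. Let f : S² → S² be a homeomorphism isotopic to the identity, let F be a finite subset of the fixed-point set Fix(f) = {x : f(x) = x} with at least 3 elements, and let k ≥ 1 be an integer such that f^k is isotopic to the identity relative to F. Then f is isotopic to the identity relative to F. -/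
open Metric

section

theorem freeGroup_center_trivial {α : Type*} (z : FreeGroup α)
    (hz : ∀ u, z * u = u * z) (hne : ∃ x y : α, x ≠ y) : z = 1 := by
  classical
  by_contra hz1
  have h1 : z.toWord ≠ [] := fun h => hz1 (FreeGroup.toWord_eq_nil_iff.1 h)
  obtain ⟨⟨x, e⟩, L, hL⟩ := List.exists_cons_of_ne_nil h1
  obtain ⟨y, hy⟩ : ∃ y : α, y ≠ x := by
    obtain ⟨a, b, hab⟩ := hne
    by_cases h : a = x
    · exact ⟨b, fun hb => hab (h.trans hb.symm)⟩
    · exact ⟨a, h⟩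
  have h2 : (FreeGroup.of y * z).toWord = (y, true) :: (x, e) :: L := by
    rw [FreeGroup.toWord_mul, FreeGroup.toWord_of, hL, List.singleton_append,
      FreeGroup.reduce.cons]
    have : FreeGroup.reduce ((x, e) :: L) = (x, e) :: L := by
      rw [← hL, FreeGroup.reduce_toWord]
    rw [this]
    simp [hy]
  have h3 := FreeGroup.toWord_mul_sublist z (FreeGroup.of y)
  rw [hz, h2, hL, FreeGroup.toWord_of] at h3
  have h4 := h3.eq_of_length (by simp)
  simp [hy] at h4

/-- A group embedded in a free group, not commutative: a root of a central element is trivial. -/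
theorem eq_one_of_pow_central {G : Type*} [Group G] {α : Type*} (φ : G →* FreeGroup α)
    (hφ : Function.Injective φ) (u v : G) (huv : u * v ≠ v * u) (g : G) (k : ℕ) (hk : 1 ≤ k)
    (hg : ∀ x, g ^ k * x = x * g ^ k) : g = 1 := by
  classical
  let e : G ≃* φ.range := MonoidHom.ofInjective hφ
  let e2 : φ.range ≃* FreeGroup (IsFreeGroup.Generators φ.range) :=
    IsFreeGroup.toFreeGroup φ.range
  have hne : ∃ x y : IsFreeGroup.Generators φ.range, x ≠ y := by
    by_contra hcon
    push Not at hcon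
    have hsub : Subsingleton (IsFreeGroup.Generators φ.range) := ⟨hcon⟩
    apply huv
    apply (e.trans e2).injective
    rw [map_mul, map_mul]
    generalize (e.trans e2) u = a
    generalize (e.trans e2) v = b
    rcases isEmpty_or_nonempty (IsFreeGroup.Generators φ.range) with h | ⟨⟨x⟩⟩
    · exact Subsingleton.elim _ _
    · have hc : ∀ a : FreeGroup (IsFreeGroup.Generators φ.range), ∃ n : ℤ,
          a = FreeGroup.of x ^ n := by
        intro a
        induction a using FreeGroup.induction_on with
        | C1 => exact ⟨0, by simp⟩
        | of y => exact ⟨1, by simp [hcon y x]⟩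
        | inv_of y _ => exact ⟨-1, by simp [hcon y x]⟩
        | mul a b ha hb =>
          obtain ⟨n, rfl⟩ := ha
          obtain ⟨m, rfl⟩ := hb
          exact ⟨n + m, by rw [zpow_add]⟩
      obtain ⟨n, rfl⟩ := hc a
      obtain ⟨m, rfl⟩ := hc b
      rw [← zpow_add, ← zpow_add, add_comm]
  have h1 : (e.trans e2) (g ^ k) = 1 := by
    apply freeGroup_center_trivial _ _ hne
    intro u
    obtain ⟨u, rfl⟩ := (e.trans e2).surjective u
    rw [← map_mul, ← map_mul, hg]
  rw [map_pow] at h1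
  have h2 : (e.trans e2) g = 1 := by
    have := pow_left_injective (M := FreeGroup (IsFreeGroup.Generators φ.range)) (n := k) (by omega)
    apply this
    simpa using h1
  exact (e.trans e2).injective (h2.trans (map_one _).symm)

end

section

open Topology

theorem path_class_induction {Y ι : Type*} [TopologicalSpace Y] (U : ι → Set Y)
    (hUo : ∀ i, IsOpen (U i)) (hUc : ∀ y, ∃ i, y ∈ U i)
    (P : ∀ x y : Y, Path.Homotopic.Quotient x y → Prop)
    (hP : ∀ i x y (q : Path x y), (∀ t, q t ∈ U i) → P x y (Path.Homotopic.Quotient.mk q))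
    (ht : ∀ x y z (p : Path.Homotopic.Quotient x y) (q : Path.Homotopic.Quotient y z),
      P x y p → P y z q → P x z (p.trans q)) :
    ∀ x y (q : Path.Homotopic.Quotient x y), P x y q := by
  intro x y q
  induction q using Path.Homotopic.Quotient.ind with
  | mk γ => 
  obtain ⟨t, t0, tm, ⟨N, hN⟩, hsub⟩ := exists_monotone_Icc_subset_open_cover_unitInterval
    (c := fun i => γ ⁻¹' (U i)) (fun i => (hUo i).preimage γ.continuous)
    (fun s _ => by
      obtain ⟨i, hi⟩ := hUc (γ s)
      exact Set.mem_iUnion.2 ⟨i, hi⟩)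
  have hsmall : ∀ n, P _ _ (Path.Homotopic.Quotient.mk (γ.subpath (t n) (t (n+1)))) := by
    intro n
    obtain ⟨i, hi⟩ := hsub n
    apply hP i
    intro s
    have : γ.subpath (t n) (t (n+1)) s ∈ Set.range (γ.subpath (t n) (t (n+1))) := ⟨s, rfl⟩
    rw [Path.range_subpath_of_le _ _ _ (tm (Nat.le_succ n))] at this
    obtain ⟨s', hs', h⟩ := this
    rw [← h]
    exact hi hs'
  have hall : ∀ n, P _ _ (Path.Homotopic.Quotient.mk (γ.subpath (t 0) (t (n + 1)))) := by
    intro n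
    induction n with
    | zero => exact hsmall 0
    | succ n ih =>
      have h := ht _ _ _ _ _ ih (hsmall (n+1))
      rw [← Path.Homotopic.Quotient.mk_trans] at h
      rwa [Path.Homotopic.Quotient.eq.2 ⟨Path.Homotopy.subpathTransSubpath γ _ _ _⟩] at h
  have h := hall N
  rw [t0, hN (N+1) (by omega), Path.subpath_zero_one] at h
  have key : ∀ (x' y' : Y) (hx : x' = x) (hy : y' = y),
      P x' y' (Path.Homotopic.Quotient.mk (γ.cast hx hy)) →
      P x y (Path.Homotopic.Quotient.mk γ) := by
    rintro x' y' rfl rfl h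
    exact h
  exact key _ _ _ _ h

theorem mk_eq_of_simplyConnected {Y : Type*} [TopologicalSpace Y] {U : Set Y}
    (hU : IsSimplyConnected U) {x y : Y} (q q' : Path x y) (hq : ∀ t, q t ∈ U)
    (hq' : ∀ t, q' t ∈ U) :
    Path.Homotopic.Quotient.mk q = Path.Homotopic.Quotient.mk q' := by
  have := hU.simplyConnectedSpace
  have hx : x ∈ U := by simpa using hq 0
  have hy : y ∈ U := by simpa using hq 1
  let r : Path (⟨x, hx⟩ : U) ⟨y, hy⟩ :=
    { toFun := fun t => ⟨q t, hq t⟩, source' := by simp, target' := by simp }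
  let r' : Path (⟨x, hx⟩ : U) ⟨y, hy⟩ :=
    { toFun := fun t => ⟨q' t, hq' t⟩, source' := by simp, target' := by simp }
  have h := SimplyConnectedSpace.paths_homotopic r r'
  exact Path.Homotopic.Quotient.eq.2 (h.map ⟨Subtype.val, continuous_subtype_val⟩)

end

section

open Topology

/-- Data for a van Kampen type computation: a cover by two simply connected open sets, and a
locally constant labelling of the path components of the intersection. -/
structure VK (Y J : Type) [TopologicalSpace Y] where
  U : Bool → Set Y
  isOpen_U : ∀ i, IsOpen (U i)
  cover : ∀ y, ∃ i, y ∈ U i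
  sc : ∀ i, IsSimplyConnected (U i)
  c : Y → J
  loc : ∀ y, (∀ i, y ∈ U i) → ∀ᶠ y' in 𝓝 y, c y' = c y
  join : ∀ y y', (∀ i, y ∈ U i) → (∀ i, y' ∈ U i) → c y = c y' →
    ∃ q : Path y y', ∀ i t, q t ∈ U i

namespace VK

variable {Y J : Type} [TopologicalSpace Y] (V : VK Y J)

/-- transition elements -/
def kap (V : VK Y J) (i j : Bool) (y : Y) : FreeGroup J :=
  if i = j then 1 else if i then FreeGroup.of (V.c y) else (FreeGroup.of (V.c y))⁻¹

theorem kap_self (i : Bool) (y : Y) : V.kap i i y = 1 := by simp [kap]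

theorem kap_mul (i j k : Bool) (y : Y) : V.kap j k y * V.kap i j y = V.kap i k y := by
  cases i <;> cases j <;> cases k <;> simp [kap]

local instance instTopFree : TopologicalSpace (FreeGroup J) := ⊥
local instance instDiscFree : DiscreteTopology (FreeGroup J) := ⟨rfl⟩

/-- The bundle core with fiber the free group. -/
noncomputable def core : FiberBundleCore Bool Y (FreeGroup J) where
  baseSet := V.U
  isOpen_baseSet := V.isOpen_U
  indexAt y := (V.cover y).choose
  mem_baseSet_at y := (V.cover y).choose_spec
  coordChange i j y h := V.kap i j y * h
  coordChange_self i y _ h := by simp [kap_self]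
  continuousOn_coordChange i j := by
    rintro ⟨y, h⟩ ⟨hy, -⟩
    apply ContinuousAt.continuousWithinAt
    by_cases hij : i = j
    · subst hij
      simp only [kap_self, one_mul]
      exact continuous_snd.continuousAt
    · have hall : ∀ l, y ∈ V.U l := by
        intro l
        have : l = i ∨ l = j := by
          cases l <;> cases i <;> cases j <;> simp at hij ⊢
        rcases this with rfl | rfl
        · exact hy.1
        · exact hy.2
      have h1 : ∀ᶠ p : Y × FreeGroup J in 𝓝 (y, h), V.c p.1 = V.c y := by
        exact (continuous_fst.tendsto (y, h)).eventually (V.loc y hall)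
      have h2 : (fun p : Y × FreeGroup J => V.kap i j p.1 * p.2) =ᶠ[𝓝 (y, h)]
          (fun p => (fun g => V.kap i j y * g) p.2) := by
        filter_upwards [h1] with p hp
        simp [kap, hp]
      refine ContinuousAt.congr ?_ h2.symm
      exact (continuous_of_discreteTopology.comp continuous_snd).continuousAt
  coordChange_comp i j k y _ h := by
    rw [← mul_assoc, kap_mul]

/-- covering map -/
theorem cov : IsCoveringMap (V.core.proj) := FiberBundle.isCoveringMap (E := V.core.Fiber)

/-- point of the total space with given coordinate -/
noncomputable def pt (i : Bool) (y : Y) (h : FreeGroup J) : V.core.proj ⁻¹' {y} :=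
  ⟨⟨y, V.kap i (V.core.indexAt y) y * h⟩, rfl⟩

theorem pt_inj (i : Bool) (y : Y) {h h' : FreeGroup J} (e : V.pt i y h = V.pt i y h') :
    h = h' := by
  have e1 := congrArg Subtype.val e
  simp only [pt] at e1
  have e2 : (V.kap i (V.core.indexAt y) y * h) = (V.kap i (V.core.indexAt y) y * h') := by
    have := (Bundle.TotalSpace.mk.inj e1).2
    exact eq_of_heq this
  exact mul_left_cancel e2

theorem pt_change (i j : Bool) (y : Y) (h : FreeGroup J) :
    V.pt i y h = V.pt j y (V.kap i j y * h) := by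
  apply Subtype.ext
  simp only [pt]
  rw [← mul_assoc, kap_mul]

theorem monodromy_of_mem (i : Bool) {x y : Y} (q : Path x y) (hq : ∀ t, q t ∈ V.U i)
    (h : FreeGroup J) :
    V.cov.monodromy (Path.Homotopic.Quotient.mk q) (V.pt i x h) = V.pt i y h := by
  apply Subtype.ext
  have hh : ∀ x' x : Y, x' = x → (V.pt i x' h).1 = (V.pt i x h).1 := by
    rintro x' x rfl
    rfl
  have hlift : (fun t => (V.pt i (q t) h).1) =
      V.cov.liftPath q (V.pt i x h).1 (q.source.trans rfl) := by
    rw [V.cov.eq_liftPath_iff]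
    refine ⟨?_, ?_, ?_⟩
    · have h1 : ContinuousOn (V.core.localTriv i).toPartialEquiv.symm
          (V.core.localTriv i).target := (V.core.localTriv i).continuousOn_invFun
      have h2 : Continuous (fun t => (q t, h)) := by fun_prop
      have h3 := h1.comp_continuous h2 (fun t => by
        rw [V.core.mem_localTriv_target]
        exact hq t)
      exact h3
    · rfl
    · exact hh _ _ q.source
  have h1 := congrFun hlift 1
  exact h1.symm.trans (hh _ _ q.target)

end VK

end

section

open Topology

namespace VK

variable {Y J : Type} [TopologicalSpace Y] (V : VK Y J)

theorem main (b z₁ z₂ : Y) (hb : ∀ i, b ∈ V.U i) (hz₁ : ∀ i, z₁ ∈ V.U i)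
    (hz₂ : ∀ i, z₂ ∈ V.U i) (h1 : V.c b ≠ V.c z₁) (h2 : V.c b ≠ V.c z₂) (h12 : V.c z₁ ≠ V.c z₂)
    (γ : FundamentalGroup Y b) (k : ℕ) (hk : 1 ≤ k) (hγ : ∀ x, γ ^ k * x = x * γ ^ k) :
    γ = 1 := by
  classical
  have hw : ∀ i z, z ∈ V.U i → ∃ q : Path b z, ∀ t, q t ∈ V.U i := by
    intro i z hz
    obtain ⟨q, hq⟩ := (V.sc i).isPathConnected.joinedIn b (hb i) z hz
    exact ⟨q, hq⟩
  choose W hW using hw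
  let w : ∀ i z, z ∈ V.U i → Path.Homotopic.Quotient b z := fun i z hz => Path.Homotopic.Quotient.mk (W i z hz)
  have hwq : ∀ i z z' hz hz' (q : Path z z'), (∀ t, q t ∈ V.U i) →
      (w i z hz).trans (Path.Homotopic.Quotient.mk q) = w i z' hz' := by
    intro i z z' hz hz' q hq
    rw [← Path.Homotopic.Quotient.mk_trans]
    refine mk_eq_of_simplyConnected (V.sc i) _ _ ?_ (hW i z' hz')
    intro t
    rw [Path.trans_apply]
    split_ifs
    · exact hW _ _ _ _
    · exact hq _
  let yy : ∀ z, (∀ i, z ∈ V.U i) → Path.Homotopic.Quotient b b := fun z hz =>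
    (w true z (hz true)).trans (w false z (hz false)).symm
  have hyy : ∀ z z' hz hz', V.c z = V.c z' → yy z hz = yy z' hz' := by
    intro z z' hz hz' hc
    obtain ⟨q, hq⟩ := V.join z z' hz hz' hc
    simp only [yy]
    rw [← hwq true z z' (hz true) (hz' true) q (hq true),
      ← hwq false z z' (hz false) (hz' false) q (hq false)]
    generalize w true z (hz true) = a
    generalize w false z (hz false) = c
    generalize Path.Homotopic.Quotient.mk q = d
    have : (c.trans d).symm = d.symm.trans c.symm := by
      induction c using Path.Homotopic.Quotient.ind
      induction d using Path.Homotopic.Quotient.ind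
      rw [← Path.Homotopic.Quotient.mk_trans, ← Path.Homotopic.Quotient.mk_symm, Path.trans_symm, Path.Homotopic.Quotient.mk_trans,
        Path.Homotopic.Quotient.mk_symm, Path.Homotopic.Quotient.mk_symm]
    rw [this, ← Path.Homotopic.Quotient.trans_assoc, Path.Homotopic.Quotient.trans_assoc a d, Path.Homotopic.Quotient.trans_symm,
      Path.Homotopic.Quotient.trans_refl]
  let ψ : FreeGroup J →* FundamentalGroup Y b := FreeGroup.lift (fun j =>
    if h : ∃ z, (∀ i, z ∈ V.U i) ∧ V.c z = j then
      FundamentalGroup.fromPath (yy h.choose h.choose_spec.1) else 1)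
  have hψ : ∀ z hz, ψ (FreeGroup.of (V.c z)) = FundamentalGroup.fromPath (yy z hz) := by
    intro z hz
    have h : ∃ z', (∀ i, z' ∈ V.U i) ∧ V.c z' = V.c z := ⟨z, hz, rfl⟩
    simp only [ψ, FreeGroup.lift_apply_of]
    rw [dif_pos h]
    exact hyy _ _ _ _ h.choose_spec.2
  let Ψ : FreeGroup J → Path.Homotopic.Quotient b b := fun g => (ψ g).toPath
  have Ψmul : ∀ g g', Ψ (g * g') = (Ψ g').trans (Ψ g) := by
    intro g g'
    simp only [Ψ, map_mul]
    rfl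
  have Ψone : Ψ 1 = Path.Homotopic.Quotient.refl b := by
    simp only [Ψ, map_one]
    rfl
  have Ψof : ∀ z hz, Ψ (FreeGroup.of (V.c z)) = yy z hz := hψ
  have Ψinv : ∀ g, Ψ g⁻¹ = (Ψ g).symm := by
    intro g
    simp only [Ψ, map_inv]
    rfl
  have hkap : ∀ i l z hi hl, w i z hi = (Ψ (V.kap i l z)).trans (w l z hl) := by
    intro i l z hi hl
    by_cases hil : i = l
    · subst hil
      rw [kap_self, Ψone, Path.Homotopic.Quotient.refl_trans]
    · have hz : ∀ m, z ∈ V.U m := by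
        intro m
        have : m = i ∨ m = l := by
          cases m <;> cases i <;> cases l <;> simp at hil ⊢
        rcases this with rfl | rfl <;> assumption
      have e1 : w true z (hz true) =
          (Ψ (FreeGroup.of (V.c z))).trans (w false z (hz false)) := by
        rw [Ψof z hz]
        simp only [yy]
        rw [Path.Homotopic.Quotient.trans_assoc, Path.Homotopic.Quotient.symm_trans, Path.Homotopic.Quotient.trans_refl]
      cases i <;> cases l <;> simp at hil
      · simp only [kap]
        simp only [Bool.false_eq_true, if_false]
        rw [Ψinv, e1, ← Path.Homotopic.Quotient.trans_assoc, Path.Homotopic.Quotient.symm_trans, Path.Homotopic.Quotient.refl_trans]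
      · simpa [kap] using e1
  have key := path_class_induction V.U V.isOpen_U V.cover
    (fun z z' q => ∀ i j hi hj, ∃ g : FreeGroup J,
      (∀ h, V.cov.monodromy q (V.pt i z h) = V.pt j z' (g * h)) ∧
      (w i z hi).trans q = (Ψ g).trans (w j z' hj))
    (by
      intro l z z' q hq i j hi hj
      have hl : z ∈ V.U l := by simpa using hq 0
      have hl' : z' ∈ V.U l := by simpa using hq 1
      refine ⟨V.kap l j z' * V.kap i l z, ?_, ?_⟩
      · intro h
        rw [V.pt_change i l, V.monodromy_of_mem l q hq, V.pt_change l j, mul_assoc]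
      · rw [Ψmul, hkap i l z hi hl, Path.Homotopic.Quotient.trans_assoc, hwq l z z' hl hl' q hq,
          hkap l j z' hl' hj, Path.Homotopic.Quotient.trans_assoc])
    (by
      intro x y z p q hp hq i j hi hj
      obtain ⟨l, hl⟩ := V.cover y
      obtain ⟨g, hg1, hg2⟩ := hp i l hi hl
      obtain ⟨g', hg1', hg2'⟩ := hq l j hl hj
      refine ⟨g' * g, ?_, ?_⟩
      · intro h
        rw [V.cov.monodromy_trans_apply, hg1, hg1', mul_assoc]
      · rw [← Path.Homotopic.Quotient.trans_assoc, hg2, Path.Homotopic.Quotient.trans_assoc, hg2', Ψmul,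
          Path.Homotopic.Quotient.trans_assoc])
  have key2 : ∀ q : FundamentalGroup Y b, ∃ g : FreeGroup J,
      (∀ h, V.cov.monodromy q.toPath (V.pt true b h) = V.pt true b (g * h)) ∧
      (w true b (hb true)).trans q.toPath = (Ψ g).trans (w true b (hb true)) :=
    fun q => key b b q.toPath true true (hb true) (hb true)
  choose Φ hΦ1 hΦ2 using key2
  have Φu : ∀ q g, (∀ h, V.cov.monodromy (FundamentalGroup.toPath q) (V.pt true b h)
      = V.pt true b (g * h)) → Φ q = g := by
    intro q g hg
    have := hΦ1 q 1
    rw [hg 1] at this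
    have := V.pt_inj true b this
    simpa using this.symm
  have wb : w true b (hb true) = Path.Homotopic.Quotient.refl b := by
    simp only [w]
    exact mk_eq_of_simplyConnected (V.sc true) _ (Path.refl b) (hW _ _ _)
      (fun t => by simpa using hb true)
  let φ : FundamentalGroup Y b →* FreeGroup J := MonoidHom.mk' Φ (by
    intro p q
    apply Φu
    intro h
    have : (p * q).toPath = q.toPath.trans p.toPath := rfl
    rw [this, V.cov.monodromy_trans_apply, hΦ1, hΦ1, mul_assoc])
  have hφ : Function.Injective φ := by
    intro p q hpq
    have e1 := hΦ2 p
    have e2 := hΦ2 q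
    have e3 : Φ p = Φ q := hpq
    rw [wb, Path.Homotopic.Quotient.refl_trans, Path.Homotopic.Quotient.trans_refl] at e1 e2
    rw [← e3, ← e1] at e2
    exact e2.symm
  have hloop : ∀ z (hz : ∀ i, z ∈ V.U i), φ (FundamentalGroup.fromPath (yy z hz)) =
      (FreeGroup.of (V.c b))⁻¹ * FreeGroup.of (V.c z) := by
    intro z hz
    apply Φu
    intro h
    have e : FundamentalGroup.toPath (FundamentalGroup.fromPath (yy z hz)) =
      (Path.Homotopic.Quotient.mk (W true z (hz true))).trans (Path.Homotopic.Quotient.mk (W false z (hz false)).symm) := rfl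
    rw [e, V.cov.monodromy_trans_apply, V.monodromy_of_mem true _ (hW _ _ _),
      V.pt_change true false, V.monodromy_of_mem false (W false z (hz false)).symm
        (fun t => hW false z (hz false) _),
      V.pt_change false true]
    simp [kap, mul_assoc]
  refine eq_one_of_pow_central φ hφ (FundamentalGroup.fromPath (yy z₁ hz₁))
    (FundamentalGroup.fromPath (yy z₂ hz₂)) ?_ γ k hk hγ
  intro h
  have h := congrArg φ h
  rw [map_mul, map_mul, hloop, hloop] at h
  let θ : FreeGroup J →* Equiv.Perm (Fin 3) := FreeGroup.lift (fun j =>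
    if j = V.c z₁ then Equiv.swap 0 1 else if j = V.c z₂ then Equiv.swap 1 2 else 1)
  have h := congrArg θ h
  simp only [map_mul, map_inv, θ, FreeGroup.lift_apply_of] at h
  rw [if_neg h1, if_neg h2, if_pos trivial, if_neg h12.symm, if_pos trivial] at h
  revert h
  decide

end VK

end

section

open Topology

namespace PP

/-- skew coordinate -/
noncomputable def X (s : ℝ) (z : ℂ) : ℝ := z.re - s * z.im

theorem X_cont (s : ℝ) : Continuous (X s) := by
  unfold X
  fun_prop

theorem exists_inj (A : Set ℂ) (hA : A.Finite) : ∃ s : ℝ, Set.InjOn (X s) A := by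
  obtain ⟨s, hs⟩ := (((hA.prod hA).image
    (fun p : ℂ × ℂ => (p.1.re - p.2.re) / (p.1.im - p.2.im))).infinite_compl).nonempty
  refine ⟨s, ?_⟩
  intro a ha b hb hab
  simp only [X] at hab
  by_cases him : a.im = b.im
  · rw [him] at hab
    exact Complex.ext (by linarith) him
  · exfalso
    apply hs
    refine ⟨(a, b), ⟨ha, hb⟩, ?_⟩
    have : a.im - b.im ≠ 0 := sub_ne_zero.2 him
    simp only
    rw [div_eq_iff this]
    linarith

/-- sign -/
def sg (i : Bool) : ℝ := if i then 1 else -1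

theorem sg_mul (i : Bool) : sg i * sg i = 1 := by cases i <;> simp [sg]

/-- half-slit set -/
def S (A : Set ℂ) (s : ℝ) (i : Bool) : Set ℂ :=
  {z | ∀ a ∈ A, X s z = X s a → sg i * a.im < sg i * z.im}

theorem S_sub (A : Set ℂ) (s : ℝ) (i : Bool) (z : ℂ) (hz : z ∈ S A s i) : z ∉ A := fun h =>
  lt_irrefl _ (hz z h rfl)

theorem S_open (A : Set ℂ) (hA : A.Finite) (s : ℝ) (i : Bool) : IsOpen (S A s i) := by
  have : S A s i = ⋂ a ∈ A, ({z | X s z ≠ X s a} ∪ {z | sg i * a.im < sg i * z.im}) := by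
    ext z
    simp only [S, Set.mem_ofPred_eq, Set.mem_iInter, Set.mem_union]
    refine forall₂_congr fun a _ => ?_
    tauto
  rw [this]
  refine hA.isOpen_biInter fun a _ => ?_
  refine IsOpen.union ?_ ?_
  · exact isOpen_ne_fun (X_cont s) continuous_const
  · exact isOpen_lt continuous_const (by fun_prop)

theorem S_sc (A : Set ℂ) (hA : A.Finite) (s : ℝ) (i : Bool) : IsSimplyConnected (S A s i) := by
  obtain ⟨K, hK⟩ : ∃ K : ℝ, ∀ a ∈ A, |a.im| ≤ K := by
    obtain ⟨K, hK⟩ := (hA.image (fun a : ℂ => |a.im|)).bddAbove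
    exact ⟨K, fun a ha => hK ⟨a, ha, rfl⟩⟩
  let M : ℝ := |K| + 1
  have hM : 0 < M := by positivity
  have hMK : ∀ a ∈ A, sg i * a.im < M := by
    intro a ha
    have h1 := hK a ha
    have h2 := abs_le.1 h1
    have h3 := le_abs_self K
    cases i <;> simp only [sg, M] <;> simp <;> linarith
  have hH : ∀ z : ℂ, M ≤ sg i * z.im → z ∈ S A s i := fun z hz a ha _ => (hMK a ha).trans_le hz
  let d : ℂ := ⟨s, 1⟩
  let g : ℝ → ℂ → ℂ := fun t z => z + ((sg i * t * (M + |z.im|) : ℝ) : ℂ) * d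
  have gX : ∀ t z, X s (g t z) = X s z := by
    intro t z
    simp [X, g, d]
    ring
  have gim : ∀ t z, sg i * (g t z).im = sg i * z.im + t * (M + |z.im|) := by
    intro t z
    have := sg_mul i
    simp [g, d]
    linear_combination (t * (M + |z.im|)) * this
  have gcont : Continuous (fun p : ℝ × ℂ => g p.1 p.2) := by
    simp only [g]
    fun_prop
  have gS : ∀ t z, 0 ≤ t → z ∈ S A s i → g t z ∈ S A s i := by
    intro t z ht hz a ha hX
    rw [gX] at hX
    rw [gim]
    have := hz a ha hX
    have : 0 ≤ t * (M + |z.im|) := by positivity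
    linarith
  have g1 : ∀ z, M ≤ sg i * (g 1 z).im := by
    intro z
    rw [gim]
    have h1 := neg_abs_le z.im
    have h2 := le_abs_self z.im
    cases i <;> simp [sg] <;> linarith
  let c0 : ℂ := ⟨0, sg i * M⟩
  have c0im : sg i * c0.im = M := by
    have := sg_mul i
    simp only [c0]
    linear_combination M * this
  have c0S : c0 ∈ S A s i := hH _ c0im.ge
  have h2S : ∀ t z, 0 ≤ t → t ≤ 1 → ((1 - t : ℝ) : ℂ) * g 1 z + (t : ℂ) * c0 ∈ S A s i := by
    intro t z h0 h1
    apply hH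
    have e1 := g1 z
    have : sg i * (((1 - t : ℝ) : ℂ) * g 1 z + (t : ℂ) * c0).im
        = (1 - t) * (sg i * (g 1 z).im) + t * (sg i * c0.im) := by
      simp
      ring
    rw [this, c0im]
    nlinarith
  let G : C(S A s i, S A s i) := ⟨fun z => ⟨g 1 z.1, gS 1 z.1 zero_le_one z.2⟩, by
    refine Continuous.subtype_mk ?_ _
    exact gcont.comp (by fun_prop : Continuous fun z : S A s i => ((1 : ℝ), z.1))⟩
  have hom1 : ContinuousMap.Homotopic (ContinuousMap.id (S A s i)) G := by
    refine ⟨⟨⟨fun p => ⟨g p.1 p.2.1, gS _ _ p.1.2.1 p.2.2⟩, ?_⟩, ?_, ?_⟩⟩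
    · refine Continuous.subtype_mk ?_ _
      exact gcont.comp (by fun_prop :
        Continuous fun p : unitInterval × S A s i => ((p.1 : ℝ), p.2.1))
    · intro z
      apply Subtype.ext
      simp [g]
    · intro z
      apply Subtype.ext
      simp [G]
  have hom2 : ContinuousMap.Homotopic G (ContinuousMap.const _ ⟨c0, c0S⟩) := by
    refine ⟨⟨⟨fun p => ⟨((1 - p.1 : ℝ) : ℂ) * g 1 p.2.1 + ((p.1 : ℝ) : ℂ) * c0,
      h2S _ _ p.1.2.1 p.1.2.2⟩, ?_⟩, ?_, ?_⟩⟩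
    · refine Continuous.subtype_mk ?_ _
      have := gcont.comp (by fun_prop :
        Continuous fun p : unitInterval × S A s i => ((1 : ℝ), p.2.1))
      simp only [Function.comp_def] at this
      fun_prop
    · intro z
      apply Subtype.ext
      simp [G]
    · intro z
      apply Subtype.ext
      simp
  have : ContractibleSpace (S A s i) :=
    (contractible_iff_id_nullhomotopic _).2 ⟨_, hom1.trans hom2⟩
  exact (inferInstance : SimplyConnectedSpace (S A s i))

theorem S_both (A : Set ℂ) (s : ℝ) (z : ℂ) : (∀ i, z ∈ S A s i) ↔ ∀ a ∈ A, X s z ≠ X s a := by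
  constructor
  · intro h a ha hX
    have h1 := h true a ha hX
    have h2 := h false a ha hX
    simp [sg] at h1 h2
    linarith
  · intro h i a ha hX
    exact absurd hX (h a ha)

/-- The van Kampen data for a punctured plane. -/
noncomputable def vk (A : Set ℂ) (hA : A.Finite) (s : ℝ) (hs : Set.InjOn (X s) A) :
    VK {z : ℂ // z ∉ A} (Set ℂ) where
  U i := Subtype.val ⁻¹' (S A s i)
  isOpen_U i := (S_open A hA s i).preimage continuous_subtype_val
  cover := by
    rintro ⟨y, hy⟩
    by_cases h : ∃ a ∈ A, X s y = X s a
    · obtain ⟨a, ha, hX⟩ := h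
      have him : y.im ≠ a.im := by
        intro h
        apply hy
        have : y = a := by
          refine Complex.ext ?_ h
          simp only [X] at hX
          rw [h] at hX
          linarith
        rwa [this]
      have hu : ∀ i, sg i * a.im < sg i * y.im → y ∈ S A s i := by
        intro i hi a' ha' hX'
        have := hs ha ha' (hX.symm.trans hX')
        rwa [← this]
      rcases lt_or_gt_of_ne him with h | h
      · exact ⟨false, hu _ (by simpa [sg] using h)⟩
      · exact ⟨true, hu _ (by simpa [sg] using h)⟩
    · push Not at h
      exact ⟨true, fun a ha hX => absurd hX (h a ha)⟩
  sc i := by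
    have h := (Topology.IsEmbedding.subtypeVal (p := fun z : ℂ => z ∉ A)).isSimplyConnected_image
      (s := Subtype.val ⁻¹' (S A s i))
    have e : (Subtype.val : {z : ℂ // z ∉ A} → ℂ) '' (Subtype.val ⁻¹' (S A s i)) = S A s i := by
      ext z
      constructor
      · rintro ⟨y, hy, rfl⟩
        exact hy
      · intro hz
        exact ⟨⟨z, S_sub A s i z hz⟩, hz, rfl⟩
    rw [e] at h
    exact h.1 (S_sc A hA s i)
  c y := {a | a ∈ A ∧ X s a < X s y}
  loc := by
    intro y hy
    have hy' := (S_both A s y).1 hy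
    have : ∀ᶠ y' : {z : ℂ // z ∉ A} in 𝓝 y, ∀ a ∈ A, (X s a < X s y' ↔ X s a < X s y) := by
      rw [Filter.eventually_all_finite hA]
      intro a ha
      have hc : Continuous fun y' : {z : ℂ // z ∉ A} => X s y'.1 :=
        (X_cont s).comp continuous_subtype_val
      rcases lt_or_gt_of_ne (hy' a ha) with h | h
      · filter_upwards [hc.continuousAt.eventually (gt_mem_nhds h)] with y' h'
        exact ⟨fun h'' => absurd h' (not_lt.2 h''.le), fun h'' => absurd h (not_lt.2 h''.le)⟩
      · filter_upwards [hc.continuousAt.eventually (lt_mem_nhds h)] with y' h'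
        exact ⟨fun _ => h, fun _ => h'⟩
    filter_upwards [this] with y' h
    ext a
    exact and_congr_right fun ha => h a ha
  join := by
    intro y y' hy hy' hc
    have h1 := (S_both A s y).1 hy
    have h2 := (S_both A s y').1 hy'
    have key : ∀ t : unitInterval, ∀ i,
        ((1 - t : ℝ) : ℂ) * y.1 + ((t : ℝ) : ℂ) * y'.1 ∈ S A s i := by
      intro t
      rw [S_both]
      intro a ha
      have e : X s (((1 - t : ℝ) : ℂ) * y.1 + ((t : ℝ) : ℂ) * y'.1)
          = (1 - t) * X s y.1 + t * X s y'.1 := by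
        simp [X]
        ring
      rw [e]
      have hca : X s a < X s y ↔ X s a < X s y' := by
        have := Set.ext_iff.1 hc a
        simpa [ha] using this
      have t0 := t.2.1
      have t1 := t.2.2
      rcases lt_or_gt_of_ne (h1 a ha) with h | h
      · have h' : X s y' < X s a := by
          rcases lt_or_gt_of_ne (h2 a ha) with h' | h'
          · exact h'
          · exact absurd (hca.2 h') (not_lt.2 h.le)
        apply ne_of_lt
        rcases eq_or_lt_of_le t0 with h0 | h0
        · rw [← h0]; simpa using h
        · nlinarith
      · have h' := hca.1 h
        apply ne_of_gt
        rcases eq_or_lt_of_le t0 with h0 | h0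
        · rw [← h0]; simpa using h
        · nlinarith
    refine ⟨⟨⟨fun t => ⟨((1 - t : ℝ) : ℂ) * y.1 + ((t : ℝ) : ℂ) * y'.1,
      S_sub A s true _ (key t true)⟩, ?_⟩, ?_, ?_⟩, ?_⟩
    · fun_prop
    · apply Subtype.ext; simp
    · apply Subtype.ext; simp
    · intro i t
      exact key t i

theorem pi1_root (A : Set ℂ) (hA : A.Finite) (hA2 : A.Nontrivial) (p : {z : ℂ // z ∉ A})
    (γ : FundamentalGroup {z : ℂ // z ∉ A} p) (k : ℕ) (hk : 1 ≤ k)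
    (hγ : ∀ x, γ ^ k * x = x * γ ^ k) : γ = 1 := by
  obtain ⟨s, hs⟩ := exists_inj A hA
  let V := vk A hA s hs
  have hX : ∀ x : ℝ, X s (x : ℂ) = x := by
    intro x
    simp [X]
  have hmk : ∀ x : ℝ, (∀ a ∈ A, x ≠ X s a) → ∃ y : {z : ℂ // z ∉ A}, X s y = x ∧ ∀ i, y ∈ V.U i := by
    intro x hx
    have : ∀ i, (x : ℂ) ∈ S A s i := (S_both A s x).2 (by rw [hX]; exact hx)
    exact ⟨⟨(x : ℂ), S_sub A s true _ (this true)⟩, hX x, this⟩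
  obtain ⟨a, ha, a', ha', hlt⟩ : ∃ a ∈ A, ∃ a' ∈ A, X s a < X s a' := by
    obtain ⟨a, ha, a', ha', hne⟩ := hA2
    rcases lt_or_gt_of_ne (fun h => hne (hs ha ha' h)) with h | h
    · exact ⟨a, ha, a', ha', h⟩
    · exact ⟨a', ha', a, ha, h⟩
  have hfin := hA.image (X s)
  obtain ⟨lo, hlo⟩ := hfin.bddBelow
  obtain ⟨hi, hhi⟩ := hfin.bddAbove
  obtain ⟨b, hbX, hb⟩ := hmk (lo - 1) (fun c hc => by
    have := hlo ⟨c, hc, rfl⟩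
    intro h
    linarith)
  obtain ⟨z₁, hz₁X, hz₁⟩ := hmk (hi + 1) (fun c hc => by
    have := hhi ⟨c, hc, rfl⟩
    intro h
    linarith)
  obtain ⟨x, hxI, hxA⟩ := (Set.Ioo_infinite hlt).exists_notMem_finite hfin
  obtain ⟨z₂, hz₂X, hz₂⟩ := hmk x (fun c hc h => hxA ⟨c, hc, h.symm⟩)
  have hba : a ∉ V.c b := by
    rintro ⟨-, h⟩
    have := hlo ⟨a, ha, rfl⟩
    linarith
  have h1a : ∀ c ∈ A, c ∈ V.c z₁ := by
    intro c hc
    refine ⟨hc, ?_⟩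
    have := hhi ⟨c, hc, rfl⟩
    linarith
  have h2a : a ∈ V.c z₂ := ⟨ha, by rw [hz₂X]; exact hxI.1⟩
  have h2a' : a' ∉ V.c z₂ := by
    rintro ⟨-, h⟩
    rw [hz₂X] at h
    exact absurd h (not_lt.2 hxI.2.le)
  obtain ⟨i, hpi⟩ := V.cover p
  obtain ⟨q, -⟩ := (V.sc i).isPathConnected.joinedIn p hpi b (hb i)
  let e := FundamentalGroup.fundamentalGroupMulEquivOfPath q
  have := VK.main V b z₁ z₂ hb hz₁ hz₂ (fun h => hba (h ▸ h1a a ha)) (fun h => hba (h ▸ h2a))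
    (fun h => h2a' (h ▸ h1a a' ha')) (e γ) k hk (by
      intro x
      obtain ⟨x, rfl⟩ := e.surjective x
      rw [← map_pow, ← map_mul, hγ, map_mul])
  exact e.injective (this.trans (map_one e).symm)

end PP

end

section

open Topology

namespace PP

variable {Y : Type} [TopologicalSpace Y]

/-- Naturality of the trace of a homotopy. -/
theorem trace_square (K : unitInterval × unitInterval → Y) (hK : Continuous K) (p : Y)
    (h00 : K (0, 0) = p) (h11 : K (1, 1) = p) (h01 : K (0, 1) = p) (h10 : K (1, 0) = p)
    (a b c d : Path p p) (ha : ∀ t, a t = K (0, t)) (hb : ∀ t, b t = K (t, 1))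
    (hc : ∀ t, c t = K (t, 0)) (hd : ∀ t, d t = K (1, t)) :
    Path.Homotopic.Quotient.mk (a.trans b) = Path.Homotopic.Quotient.mk (c.trans d) := by
  let A : Path ((0, 0) : unitInterval × unitInterval) (0, 1) :=
    ⟨⟨fun t => (0, t), by fun_prop⟩, rfl, rfl⟩
  let B : Path ((0, 1) : unitInterval × unitInterval) (1, 1) :=
    ⟨⟨fun t => (t, 1), by fun_prop⟩, rfl, rfl⟩
  let C : Path ((0, 0) : unitInterval × unitInterval) (1, 0) :=
    ⟨⟨fun t => (t, 0), by fun_prop⟩, rfl, rfl⟩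
  let D : Path ((1, 0) : unitInterval × unitInterval) (1, 1) :=
    ⟨⟨fun t => (1, t), by fun_prop⟩, rfl, rfl⟩
  have hI : ContractibleSpace unitInterval :=
    (convex_Icc (0 : ℝ) 1).contractibleSpace ⟨0, by simp⟩
  have h := SimplyConnectedSpace.paths_homotopic (A.trans B) (C.trans D)
  obtain ⟨h⟩ := h.map ⟨K, hK⟩
  have e1 : a.trans b = ((A.trans B).map hK).cast h00.symm h11.symm := by
    ext t
    simp only [Path.trans_apply, Path.cast_coe, Path.map_coe, Function.comp_apply]
    split_ifs
    · rw [ha]; rfl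
    · rw [hb]; rfl
  have e2 : c.trans d = ((C.trans D).map hK).cast h00.symm h11.symm := by
    ext t
    simp only [Path.trans_apply, Path.cast_coe, Path.map_coe, Function.comp_apply]
    split_ifs
    · rw [hc]; rfl
    · rw [hd]; rfl
  rw [e1, e2]
  exact Path.Homotopic.Quotient.eq.2 ⟨h.pathCast _ _⟩

theorem trace_central (f : Y → Y) (H H' : unitInterval × Y → Y) (hf : Continuous f)
    (hH : Continuous H) (hH' : Continuous H') (h0 : ∀ y, H (0, y) = y) (h1 : ∀ y, H (1, y) = f y)
    (k : ℕ) (h0' : ∀ y, H' (0, y) = y) (h1' : ∀ y, H' (1, y) = f^[k] y) (p : Y) (hp : f p = p)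
    (hp' : ∀ t, H' (t, p) = p) (γ : Path p p) (hγ : ∀ t, γ t = H (t, p))
    (x : FundamentalGroup Y p) :
    (FundamentalGroup.fromPath (Path.Homotopic.Quotient.mk γ)) ^ k * x
      = x * (FundamentalGroup.fromPath (Path.Homotopic.Quotient.mk γ)) ^ k := by
  have hpk : ∀ n, f^[n] p = p := fun n => Function.iterate_fixed hp n
  induction x using Path.Homotopic.Quotient.ind with
  | mk δ =>
  let dl : ℕ → Path p p := fun n =>
    ⟨⟨fun t => f^[n] (δ t), (hf.iterate n).comp δ.continuous⟩, by simp [hpk], by simp [hpk]⟩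
  let g := FundamentalGroup.fromPath (Path.Homotopic.Quotient.mk γ)
  let D : ℕ → FundamentalGroup Y p := fun n =>
    FundamentalGroup.fromPath (Path.Homotopic.Quotient.mk (dl n))
  have step : ∀ n, g * D n = D (n + 1) * g := by
    intro n
    have := trace_square (fun q => H (q.1, dl n q.2))
      (hH.comp (by fun_prop)) p (by simp [h0]) (by simp [h1, hp]) (by simp [h0])
      (by simp [h1, hp]) (dl n) γ γ (dl (n + 1)) (by simp [h0]) (by simp [hγ]) (by simp [hγ])
      (by
        intro t
        simp only [h1]
        exact Function.iterate_succ_apply' f n (δ t))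
    exact this
  have hpow : ∀ n, g ^ n * D 0 = D n * g ^ n := by
    intro n
    induction n with
    | zero => simp
    | succ n ih =>
      rw [pow_succ', mul_assoc, ih, ← mul_assoc, step, mul_assoc]
  have hk : D 0 = D k := by
    have := trace_square (fun q => H' (q.1, dl 0 q.2))
      (hH'.comp (by fun_prop)) p (by simp [h0']) (by simp [h1', hpk]) (by simp [h0'])
      (by simp [h1', hpk]) (dl 0) (Path.refl p) (Path.refl p) (dl k) (by simp [h0'])
      (by simp [hp']) (by simp [hp']) (by
        intro t
        simp only [h1']
        rfl)
    have e : (1 : FundamentalGroup Y p) * D 0 = D k * 1 := this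
    simpa using e
  have := hpow k
  rw [← hk] at this
  exact this

end PP

end

section

open Topology

namespace PP

theorem nhds_infty_basis : (𝓝 (OnePoint.infty : OnePoint ℂ)).HasBasis (fun _ : ℝ => True)
    (fun R => {w | ∀ z : ℂ, w = z → R < ‖z‖}) := by
  rw [OnePoint.nhds_infty_eq]
  constructor
  intro S
  rw [Filter.mem_sup, Filter.mem_map, Filter.mem_pure, Filter.coclosedCompact_eq_cocompact,
    ← Metric.cobounded_eq_cocompact]
  have hb := Metric.hasBasis_cobounded_compl_closedBall (0 : ℂ)
  rw [hb.mem_iff]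
  constructor
  · rintro ⟨⟨R, -, hR⟩, hS⟩
    refine ⟨R, trivial, ?_⟩
    intro w hw
    induction w using OnePoint.rec with
    | infty => exact hS
    | coe z =>
      have := hw z rfl
      exact hR (by simpa using this)
  · rintro ⟨R, -, hR⟩
    refine ⟨⟨R, trivial, ?_⟩, ?_⟩
    · intro z hz
      apply hR
      intro z' hz'
      have := OnePoint.coe_injective hz'
      subst this
      simpa using hz
    · apply hR
      intro z hz
      exact absurd hz (OnePoint.infty_ne_coe z)

/-- the cutoff displacement -/
noncomputable def cf (r : ℝ) (x y z : ℂ) : ℂ := ((max 0 (1 - ‖z - x‖ / r) : ℝ) : ℂ) * (y - x)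

theorem cf_lip {r : ℝ} (hr : 0 < r) (x y z z' : ℂ) :
    ‖cf r x y z - cf r x y z'‖ ≤ ‖y - x‖ / r * ‖z - z'‖ := by
  have h1 : |max 0 (1 - ‖z - x‖ / r) - max 0 (1 - ‖z' - x‖ / r)| ≤ ‖z - z'‖ / r := by
    rw [max_comm 0, max_comm 0]
    refine (abs_max_sub_max_le_abs _ _ _).trans ?_
    have : 1 - ‖z - x‖ / r - (1 - ‖z' - x‖ / r) = (‖z' - x‖ - ‖z - x‖) / r := by ring
    rw [this, abs_div, abs_of_pos hr]
    gcongr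
    refine (abs_norm_sub_norm_le _ _).trans ?_
    rw [sub_sub_sub_cancel_right, norm_sub_rev]
  unfold cf
  rw [← sub_mul, norm_mul, ← Complex.ofReal_sub, Complex.norm_real, Real.norm_eq_abs]
  calc _ ≤ ‖z - z'‖ / r * ‖y - x‖ := by gcongr
    _ = _ := by ring

theorem cf_bound {r : ℝ} (hr : 0 < r) (x y z : ℂ) : ‖cf r x y z‖ ≤ ‖y - x‖ := by
  unfold cf
  rw [norm_mul, Complex.norm_real, Real.norm_eq_abs, abs_of_nonneg (le_max_left _ _)]
  have : max 0 (1 - ‖z - x‖ / r) ≤ 1 := by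
    apply max_le zero_le_one
    have : 0 ≤ ‖z - x‖ / r := by positivity
    linarith
  calc _ ≤ 1 * ‖y - x‖ := by gcongr
    _ = _ := one_mul _

theorem push_bij {r : ℝ} (hr : 0 < r) (x y : ℂ) (hxy : ‖y - x‖ < r) :
    Function.Bijective (fun z => z + cf r x y z) := by
  have hL : ‖y - x‖ / r < 1 := (div_lt_one hr).2 hxy
  constructor
  · intro z z' h
    simp only at h
    have h1 := cf_lip hr x y z z'
    have h2 : cf r x y z - cf r x y z' = z' - z := by linear_combination h
    rw [h2, norm_sub_rev] at h1
    have : ‖z - z'‖ = 0 := by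
      have := norm_nonneg (z - z')
      nlinarith
    exact sub_eq_zero.1 (norm_eq_zero.1 this)
  · intro w
    have hc : ContractingWith ⟨‖y - x‖ / r, by positivity⟩ (fun z => w - cf r x y z) := by
      refine ⟨by exact_mod_cast hL, LipschitzWith.of_dist_le_mul fun z z' => ?_⟩
      rw [dist_eq_norm, dist_eq_norm, sub_sub_sub_cancel_left, norm_sub_rev]
      exact cf_lip hr x y z z'
    have h := hc.fixedPoint_isFixedPt
    generalize ContractingWith.fixedPoint (fun z => w - cf r x y z) hc = q at h
    refine ⟨q, ?_⟩
    have : w - cf r x y q = q := h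
    simp only
    linear_combination -this

/-- push map on the sphere -/
noncomputable def push (r : ℝ) (x y : ℂ) : OnePoint ℂ → OnePoint ℂ :=
  OnePoint.map (fun z => z + cf r x y z)

theorem push_bijective {r : ℝ} (hr : 0 < r) (x y : ℂ) (hxy : ‖y - x‖ < r) :
    Function.Bijective (push r x y) := by
  have h := push_bij hr x y hxy
  constructor
  · intro w w' e
    induction w using OnePoint.rec with
    | infty =>
      induction w' using OnePoint.rec with
      | infty => rfl
      | coe z' => exact absurd e (by simp [push])
    | coe z =>
      induction w' using OnePoint.rec with
      | infty => exact absurd e (by simp [push])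
      | coe z' =>
        simp only [push, OnePoint.map_some] at e
        rw [h.1 (OnePoint.coe_injective e)]
  · intro w
    induction w using OnePoint.rec with
    | infty => exact ⟨OnePoint.infty, rfl⟩
    | coe z =>
      obtain ⟨z', hz'⟩ := h.2 z
      exact ⟨z', by simp only [push, OnePoint.map_some]; exact congrArg _ hz'⟩

theorem push_cont {T : Type*} [TopologicalSpace T] {r : ℝ} (hr : 0 < r) (x y : T → ℂ)
    (hx : Continuous x) (hy : Continuous y) :
    Continuous (fun p : T × OnePoint ℂ => push r (x p.1) (y p.1) p.2) := by
  rw [continuous_iff_continuousAt]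
  rintro ⟨t, w⟩
  induction w using OnePoint.rec with
  | infty =>
    have e : push r (x t) (y t) OnePoint.infty = OnePoint.infty := rfl
    unfold ContinuousAt
    simp only [e]
    rw [nhds_infty_basis.tendsto_right_iff]
    intro R _
    have h1 : ∀ᶠ t' in 𝓝 t, ‖y t' - x t'‖ < ‖y t - x t‖ + 1 :=
      ((hy.sub hx).norm.continuousAt (x := t)).eventually (gt_mem_nhds (lt_add_one _))
    have h2 : ∀ᶠ w : OnePoint ℂ in 𝓝 (OnePoint.infty : OnePoint ℂ), ∀ z : ℂ, w = (z : OnePoint ℂ) →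
        R + (‖y t - x t‖ + 1) < ‖z‖ := nhds_infty_basis.mem_of_mem trivial
    rw [nhds_prod_eq]
    filter_upwards [h1.prod_mk h2]
    rintro ⟨t', w⟩ ⟨h1, h2⟩
    simp only at h1 h2
    intro z hz
    simp only at hz
    induction w using OnePoint.rec with
    | infty => exact absurd hz (by simp [push])
    | coe z' =>
      have h3 := h2 z' rfl
      simp only [push, OnePoint.map_some] at hz
      have h4 := OnePoint.coe_injective hz
      have h5 := cf_bound hr (x t') (y t') z'
      have h6 : ‖z'‖ ≤ ‖z‖ + ‖cf r (x t') (y t') z'‖ := by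
        calc ‖z'‖ = ‖z - cf r (x t') (y t') z'‖ := by rw [← h4, add_sub_cancel_right]
          _ ≤ _ := norm_sub_le _ _
      linarith
  | coe z =>
    have hemb : IsOpenEmbedding (Prod.map (id : T → T) (OnePoint.some : ℂ → OnePoint ℂ)) :=
      IsOpenEmbedding.id.prodMap OnePoint.isOpenEmbedding_coe
    have := hemb.continuousAt_iff (g := fun p : T × OnePoint ℂ => push r (x p.1) (y p.1) p.2)
      (x := (t, z))
    refine this.1 ?_
    apply Continuous.continuousAt
    have : ((fun p : T × OnePoint ℂ => push r (x p.1) (y p.1) p.2) ∘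
      Prod.map (id : T → T) (OnePoint.some : ℂ → OnePoint ℂ)) =
      fun p : T × ℂ => ((p.2 + cf r (x p.1) (y p.1) p.2 : ℂ) : OnePoint ℂ) := rfl
    rw [this]
    apply OnePoint.continuous_coe.comp
    unfold cf
    fun_prop

/-- isotopy with prescribed trace -/
def IsoTr (f : OnePoint ℂ → OnePoint ℂ) (F : Set (OnePoint ℂ)) (p : OnePoint ℂ)
    (γ : unitInterval → ℂ) : Prop :=
  ∃ H : unitInterval × OnePoint ℂ → OnePoint ℂ, Continuous H ∧
    (∀ t, IsHomeomorph fun x => H (t, x)) ∧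
    (∀ x, H (0, x) = x) ∧ (∀ x, H (1, x) = f x) ∧ (∀ t, ∀ x ∈ F, H (t, x) = x) ∧
    ∀ t, H (t, p) = γ t

theorem push_self (r : ℝ) (x : ℂ) (w : OnePoint ℂ) : push r x x w = w := by
  induction w using OnePoint.rec with
  | infty => rfl
  | coe z => simp [push, cf]

theorem isoTr_step {f : OnePoint ℂ → OnePoint ℂ} {A : Set ℂ} {p : OnePoint ℂ}
    {γ γ' : unitInterval → ℂ} (hγ : Continuous γ) (hγ' : Continuous γ') {r : ℝ} (hr : 0 < r)
    (hA : ∀ t, ∀ a ∈ A, r ≤ ‖a - γ t‖) (hd : ∀ t, ‖γ' t - γ t‖ < r) (h0 : γ 0 = γ' 0)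
    (h1 : γ 1 = γ' 1) (h : IsoTr f (insert OnePoint.infty (OnePoint.some '' A)) p γ) :
    IsoTr f (insert OnePoint.infty (OnePoint.some '' A)) p γ' := by
  obtain ⟨H, Hc, Hh, H0, H1, HF, Hp⟩ := h
  refine ⟨fun q => push r (γ q.1) (γ' q.1) (H q), ?_, ?_, ?_, ?_, ?_, ?_⟩
  · exact (push_cont hr γ γ' hγ hγ').comp (continuous_fst.prodMk Hc)
  · intro t
    rw [isHomeomorph_iff_continuous_bijective]
    refine ⟨?_, ?_⟩
    · exact ((push_cont hr γ γ' hγ hγ').comp (continuous_fst.prodMk Hc)).comp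
        (by fun_prop : Continuous fun w : OnePoint ℂ => (t, w))
    · exact (push_bijective hr _ _ (hd t)).comp (Hh t).bijective
  · intro x
    simp only [h0, push_self, H0]
  · intro x
    simp only [h1, push_self, H1]
  · intro t x hx
    simp only
    rw [HF t x hx]
    rcases hx with rfl | ⟨a, ha, rfl⟩
    · rfl
    · have h2 := hA t a ha
      have : max 0 (1 - ‖a - γ t‖ / r) = 0 := by
        apply max_eq_left
        have : 1 ≤ ‖a - γ t‖ / r := (one_le_div hr).2 h2
        linarith
      simp [push, cf, this]
  · intro t
    simp only
    rw [Hp]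
    simp [push, cf]

theorem isoTr_homotopy {f : OnePoint ℂ → OnePoint ℂ} {A : Set ℂ} (hA : A.Finite) {p : OnePoint ℂ}
    (h : unitInterval × unitInterval → ℂ) (hc : Continuous h) (hhA : ∀ q, h q ∉ A)
    (z : ℂ) (h0 : ∀ s, h (s, 0) = z) (h1 : ∀ s, h (s, 1) = z)
    (hI : IsoTr f (insert OnePoint.infty (OnePoint.some '' A)) p (fun t => h (0, t))) :
    IsoTr f (insert OnePoint.infty (OnePoint.some '' A)) p (fun t => h (1, t)) := by
  obtain ⟨r, hr, hrA⟩ : ∃ r : ℝ, 0 < r ∧ ∀ q, ∀ a ∈ A, r ≤ ‖a - h q‖ := by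
    have hcomp : IsCompact (Set.range h) := isCompact_range hc
    have hdis : Disjoint (Set.range h) A := by
      rw [Set.disjoint_left]
      rintro _ ⟨q, rfl⟩
      exact hhA q
    obtain ⟨r, hr, hd⟩ := Metric.exists_pos_forall_lt_edist hcomp hA.isClosed hdis
    refine ⟨r, by exact_mod_cast hr, fun q a ha => ?_⟩
    have := hd _ ⟨q, rfl⟩ a ha
    rw [edist_nndist, ENNReal.coe_lt_coe] at this
    rw [← dist_eq_norm, dist_comm]
    exact_mod_cast this.le
  have huc : UniformContinuous h := CompactSpace.uniformContinuous_of_continuous hc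
  obtain ⟨δ, hδ, hu⟩ := Metric.uniformContinuous_iff.1 huc r hr
  obtain ⟨N, hN⟩ := exists_nat_one_div_lt hδ
  let σ : ℕ → unitInterval := fun i => Set.projIcc 0 1 zero_le_one ((i : ℝ) / (N + 1))
  have hσ : ∀ i, dist (σ (i + 1)) (σ i) < δ := by
    intro i
    refine lt_of_le_of_lt ?_ hN
    have : dist (σ (i + 1)) (σ i) = |((σ (i+1)) : ℝ) - σ i| := rfl
    rw [this]
    refine (Set.abs_projIcc_sub_projIcc zero_le_one).trans ?_
    push_cast
    rw [← sub_div, add_sub_cancel_left, abs_of_pos (by positivity)]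
  have key : ∀ i, IsoTr f (insert OnePoint.infty (OnePoint.some '' A)) p
      (fun t => h (σ i, t)) := by
    intro i
    induction i with
    | zero =>
      have : σ 0 = 0 := by simp [σ]
      rw [this]
      exact hI
    | succ i ih =>
      refine isoTr_step (by fun_prop) (by fun_prop) hr (fun t a ha => hrA _ a ha) (fun t => ?_)
        ?_ ?_ ih
      · rw [← dist_eq_norm]
        apply hu
        rw [Prod.dist_eq]
        simp [hσ i, hδ]
      · simp only [h0]
      · simp only [h1]
  have hN1 : σ (N + 1) = 1 := by
    simp only [σ]
    push_cast
    rw [div_self (by positivity)]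
    exact Set.projIcc_right _
  have := key (N + 1)
  rwa [hN1] at this

end PP

end

section

open Topology

namespace PP

/-- determinant -/
def dt (a b : ℂ × ℂ) : ℂ := a.1 * b.2 - a.2 * b.1

open Classical in
/-- quotient map to the projective line -/
noncomputable def qq (a : ℂ × ℂ) : OnePoint ℂ := if a.2 = 0 then OnePoint.infty else (a.1 / a.2 : ℂ)

/-- section -/
noncomputable def sc (x : OnePoint ℂ) : ℂ × ℂ := x.elim (1, 0) (fun z => (z, 1))

theorem sc_infty : sc OnePoint.infty = (1, 0) := rfl
theorem sc_coe (z : ℂ) : sc z = (z, 1) := rfl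

theorem dt_sc {x y : OnePoint ℂ} (h : dt (sc x) (sc y) = 0) : x = y := by
  induction x using OnePoint.rec with
  | infty =>
    induction y using OnePoint.rec with
    | infty => rfl
    | coe y => simp [dt, sc_infty, sc_coe] at h
  | coe x =>
    induction y using OnePoint.rec with
    | infty => simp [dt, sc_infty, sc_coe] at h
    | coe y =>
      simp [dt, sc_coe] at h
      rw [sub_eq_zero.1 h]

theorem qq_smul (l : ℂ) (hl : l ≠ 0) (a : ℂ × ℂ) : qq (l * a.1, l * a.2) = qq a := by
  unfold qq
  by_cases h : a.2 = 0
  · simp [h]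
  · simp [h, hl, mul_div_mul_left]

theorem sc_qq (a : ℂ × ℂ) (ha : a.1 ≠ 0 ∨ a.2 ≠ 0) :
    ∃ l : ℂ, l ≠ 0 ∧ sc (qq a) = (l * a.1, l * a.2) := by
  unfold qq
  by_cases h : a.2 = 0
  · have h1 : a.1 ≠ 0 := by tauto
    refine ⟨a.1⁻¹, inv_ne_zero h1, ?_⟩
    simp [h, sc_infty, h1]
  · refine ⟨a.2⁻¹, inv_ne_zero h, ?_⟩
    simp [h, sc_coe]
    field_simp

theorem qq_sc (x : OnePoint ℂ) : qq (sc x) = x := by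
  induction x using OnePoint.rec with
  | infty => simp [qq, sc_infty]
  | coe x => simp [qq, sc_coe]

theorem dt_of_qq_eq (a b : ℂ × ℂ) (ha : a.1 ≠ 0 ∨ a.2 ≠ 0) (hb : b.1 ≠ 0 ∨ b.2 ≠ 0)
    (h : qq a = qq b) : dt a b = 0 := by
  obtain ⟨l, hl, h1⟩ := sc_qq a ha
  obtain ⟨m, hm, h2⟩ := sc_qq b hb
  rw [h, h2] at h1
  have e1 := congrArg Prod.fst h1
  have e2 := congrArg Prod.snd h1
  simp only at e1 e2
  have : l * m * dt a b = 0 := by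
    unfold dt
    linear_combination (-m * b.2) * e1 + (m * b.1) * e2
  simpa [hl, hm] using this

theorem qq_cont (a : ℂ × ℂ) (ha : a.1 ≠ 0 ∨ a.2 ≠ 0) : ContinuousAt qq a := by
  by_cases h : a.2 = 0
  · have h1 : a.1 ≠ 0 := by tauto
    have e : qq a = OnePoint.infty := by simp [qq, h]
    unfold ContinuousAt
    rw [e, nhds_infty_basis.tendsto_right_iff]
    intro R _
    have hev : ∀ᶠ b : ℂ × ℂ in 𝓝 a, R * ‖b.2‖ < ‖b.1‖ := by
      have hc1 : Continuous fun b : ℂ × ℂ => R * ‖b.2‖ := by fun_prop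
      have hc2 : Continuous fun b : ℂ × ℂ => ‖b.1‖ := by fun_prop
      exact hc1.continuousAt.eventually_lt hc2.continuousAt (by simp [h, h1])
    filter_upwards [hev] with b hb z hz
    unfold qq at hz
    split_ifs at hz with h0
    · exact absurd hz (OnePoint.infty_ne_coe z)
    · rw [← OnePoint.coe_injective hz, norm_div, lt_div_iff₀ (by positivity)]
      exact hb
  · have hev : ∀ᶠ b : ℂ × ℂ in 𝓝 a, ((b.1 / b.2 : ℂ) : OnePoint ℂ) = qq b := by
      filter_upwards [continuous_snd.continuousAt.eventually_ne h] with b hb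
      simp [qq, hb]
    refine ContinuousAt.congr ?_ hev
    refine OnePoint.continuous_coe.continuousAt.comp ?_
    exact continuous_fst.continuousAt.div continuous_snd.continuousAt h

theorem local_lift (x : OnePoint ℂ) : ∃ s : OnePoint ℂ → ℂ × ℂ, ContinuousAt s x ∧
    ∀ᶠ y in 𝓝 x, ∃ l : ℂ, l ≠ 0 ∧ s y = (l * (sc y).1, l * (sc y).2) := by
  induction x using OnePoint.rec with
  | infty =>
    let s : OnePoint ℂ → ℂ × ℂ := fun y => (1, y.elim 0 (fun z => z⁻¹))
    refine ⟨s, ?_, ?_⟩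
    · refine ContinuousAt.prodMk continuousAt_const ?_
      unfold ContinuousAt
      simp only [OnePoint.elim_infty]
      rw [Metric.nhds_basis_ball.tendsto_right_iff]
      intro ε hε
      filter_upwards [nhds_infty_basis.mem_of_mem (i := ε⁻¹) trivial] with y hy
      induction y using OnePoint.rec with
      | infty => simpa using hε
      | coe z =>
        have h1 := hy z rfl
        have : 0 < ‖z‖ := (inv_pos.2 hε).trans h1
        simp only [OnePoint.elim_some, Metric.mem_ball, dist_zero_right, norm_inv]
        exact inv_lt_of_inv_lt₀ hε h1
    · filter_upwards [nhds_infty_basis.mem_of_mem (i := 0) trivial] with y hy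
      induction y using OnePoint.rec with
      | infty => exact ⟨1, one_ne_zero, by simp [s, sc_infty]⟩
      | coe z =>
        have : z ≠ 0 := norm_pos_iff.1 (hy z rfl)
        exact ⟨z⁻¹, inv_ne_zero this, by simp [s, sc_coe, this]⟩
  | coe x =>
    refine ⟨sc, ?_, Filter.Eventually.of_forall fun y => ⟨1, one_ne_zero, by simp⟩⟩
    rw [← OnePoint.isOpenEmbedding_coe.continuousAt_iff]
    have : sc ∘ (OnePoint.some : ℂ → OnePoint ℂ) = fun z => (z, 1) := rfl
    rw [this]
    fun_prop

/-- components of cross ratio -/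
def cv (x y z w : ℂ × ℂ) : ℂ × ℂ := (dt w x * dt y z, dt w z * dt y x)

/-- cross ratio -/
noncomputable def CR (x y z w : OnePoint ℂ) : OnePoint ℂ := qq (cv (sc x) (sc y) (sc z) (sc w))

theorem cv_ne {x y z : OnePoint ℂ} (hxy : x ≠ y) (hxz : x ≠ z) (hyz : y ≠ z) (w : OnePoint ℂ) :
    (cv (sc x) (sc y) (sc z) (sc w)).1 ≠ 0 ∨ (cv (sc x) (sc y) (sc z) (sc w)).2 ≠ 0 := by
  by_contra h
  push Not at h
  obtain ⟨h1, h2⟩ := h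
  simp only [cv] at h1 h2
  have e1 : dt (sc w) (sc x) = 0 :=
    (mul_eq_zero.1 h1).resolve_right fun h => hyz (dt_sc h)
  have e2 : dt (sc w) (sc z) = 0 :=
    (mul_eq_zero.1 h2).resolve_right fun h => hxy (dt_sc h).symm
  exact hxz ((dt_sc e1).symm.trans (dt_sc e2))

theorem CR_x {x y z : OnePoint ℂ} (hxy : x ≠ y) (hxz : x ≠ z) (_ : y ≠ z) :
    CR x y z x = ((0 : ℂ) : OnePoint ℂ) := by
  have h1 : dt (sc x) (sc z) ≠ 0 := fun h => hxz (dt_sc h)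
  have h2 : dt (sc y) (sc x) ≠ 0 := fun h => hxy (dt_sc h).symm
  have h3 : dt (sc x) (sc x) = 0 := by simp [dt, mul_comm]
  simp [CR, cv, qq, h1, h2, h3]

theorem CR_y {x y z : OnePoint ℂ} (hxy : x ≠ y) (_ : x ≠ z) (hyz : y ≠ z) :
    CR x y z y = ((1 : ℂ) : OnePoint ℂ) := by
  have h1 : dt (sc y) (sc z) ≠ 0 := fun h => hyz (dt_sc h)
  have h2 : dt (sc y) (sc x) ≠ 0 := fun h => hxy (dt_sc h).symm
  simp only [CR, cv, qq, mul_eq_zero, h1, h2, or_self, if_false]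
  congr 1
  field_simp

theorem CR_z {x y z : OnePoint ℂ} (_ : x ≠ y) (_ : x ≠ z) (_ : y ≠ z) :
    CR x y z z = OnePoint.infty := by
  have h3 : dt (sc z) (sc z) = 0 := by simp [dt, mul_comm]
  simp [CR, cv, qq, h3]

theorem CR_bij {x y z : OnePoint ℂ} (hxy : x ≠ y) (hxz : x ≠ z) (hyz : y ≠ z) :
    Function.Bijective (CR x y z) := by
  have h1 : dt (sc y) (sc z) ≠ 0 := fun h => hyz (dt_sc h)
  have h2 : dt (sc y) (sc x) ≠ 0 := fun h => hxy (dt_sc h).symm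
  have h3 : dt (sc x) (sc z) ≠ 0 := fun h => hxz (dt_sc h)
  constructor
  · intro w w' h
    have := dt_of_qq_eq _ _ (cv_ne hxy hxz hyz w) (cv_ne hxy hxz hyz w') h
    have e : dt (sc w) (sc w') * (dt (sc x) (sc z) * dt (sc y) (sc z) * dt (sc y) (sc x)) = 0 := by
      rw [← this]
      simp only [cv, dt]
      ring
    exact dt_sc ((mul_eq_zero.1 e).resolve_right (by simp [h1, h2, h3]))
  · intro v
    let l : ℂ := (sc v).1 * dt (sc y) (sc x)
    let m : ℂ := -((sc v).2 * dt (sc y) (sc z))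
    let W : ℂ × ℂ := (l * (sc z).1 + m * (sc x).1, l * (sc z).2 + m * (sc x).2)
    have e1 : dt W (sc x) = -l * dt (sc x) (sc z) := by
      simp only [W, dt]; ring
    have e2 : dt W (sc z) = m * dt (sc x) (sc z) := by
      simp only [W, dt]; ring
    have hv : (sc v).1 ≠ 0 ∨ (sc v).2 ≠ 0 := by
      induction v using OnePoint.rec with
      | infty => left; simp [sc_infty]
      | coe z => right; simp [sc_coe]
    have hW : W.1 ≠ 0 ∨ W.2 ≠ 0 := by
      by_contra h
      push Not at h
      have f1 : dt W (sc x) = 0 := by simp [dt, h.1, h.2]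
      have f2 : dt W (sc z) = 0 := by simp [dt, h.1, h.2]
      rw [e1] at f1
      rw [e2] at f2
      simp [l, m, h1, h2, h3] at f1 f2
      tauto
    obtain ⟨n, hn, hs⟩ := sc_qq W hW
    refine ⟨qq W, ?_⟩
    have hdl : ∀ a, dt (sc (qq W)) a = n * dt W a := by
      intro a
      rw [hs]
      simp only [dt]
      ring
    unfold CR cv
    rw [hdl, hdl, e1, e2]
    have hne : -n * dt (sc x) (sc z) * dt (sc y) (sc x) * dt (sc y) (sc z) ≠ 0 := by
      simp [hn, h1, h2, h3]
    have := qq_smul _ hne (sc v)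
    rw [qq_sc] at this
    rw [← this]
    congr 1
    ext
    · simp only [l]; ring
    · simp only [m]; ring

theorem CR_cont {T : Type*} [TopologicalSpace T] (x y z w : T → OnePoint ℂ) (hx : Continuous x)
    (hy : Continuous y) (hz : Continuous z) (hw : Continuous w) (hxy : ∀ t, x t ≠ y t)
    (hxz : ∀ t, x t ≠ z t) (hyz : ∀ t, y t ≠ z t) :
    Continuous fun t => CR (x t) (y t) (z t) (w t) := by
  rw [continuous_iff_continuousAt]
  intro t
  obtain ⟨s1, c1, l1⟩ := local_lift (x t)
  obtain ⟨s2, c2, l2⟩ := local_lift (y t)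
  obtain ⟨s3, c3, l3⟩ := local_lift (z t)
  obtain ⟨s4, c4, l4⟩ := local_lift (w t)
  have key : ∀ t', (∃ l : ℂ, l ≠ 0 ∧ s1 (x t') = (l * (sc (x t')).1, l * (sc (x t')).2)) →
      (∃ l : ℂ, l ≠ 0 ∧ s2 (y t') = (l * (sc (y t')).1, l * (sc (y t')).2)) →
      (∃ l : ℂ, l ≠ 0 ∧ s3 (z t') = (l * (sc (z t')).1, l * (sc (z t')).2)) →
      (∃ l : ℂ, l ≠ 0 ∧ s4 (w t') = (l * (sc (w t')).1, l * (sc (w t')).2)) →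
      ∃ l : ℂ, l ≠ 0 ∧ cv (s1 (x t')) (s2 (y t')) (s3 (z t')) (s4 (w t')) =
        (l * (cv (sc (x t')) (sc (y t')) (sc (z t')) (sc (w t'))).1,
          l * (cv (sc (x t')) (sc (y t')) (sc (z t')) (sc (w t'))).2) := by
    rintro t' ⟨a, ha, ea⟩ ⟨b, hb, eb⟩ ⟨c, hc, ec⟩ ⟨d, hd, ed⟩
    refine ⟨a * b * c * d, by simp [ha, hb, hc, hd], ?_⟩
    rw [ea, eb, ec, ed]
    simp only [cv, dt]
    ext
    · simp only; ring
    · simp only; ring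
  have hev : ∀ᶠ t' in 𝓝 t, qq (cv (s1 (x t')) (s2 (y t')) (s3 (z t')) (s4 (w t'))) =
      CR (x t') (y t') (z t') (w t') := by
    filter_upwards [hx.continuousAt.eventually l1, hy.continuousAt.eventually l2,
      hz.continuousAt.eventually l3, hw.continuousAt.eventually l4] with t' h1 h2 h3 h4
    obtain ⟨l, hl, e⟩ := key t' h1 h2 h3 h4
    rw [e, qq_smul l hl]
    rfl
  refine ContinuousAt.congr ?_ hev
  obtain ⟨l, hl, e⟩ := key t l1.self_of_nhds l2.self_of_nhds l3.self_of_nhds l4.self_of_nhds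
  have hq : ContinuousAt qq (cv (s1 (x t)) (s2 (y t)) (s3 (z t)) (s4 (w t))) := by
    apply qq_cont
    rw [e]
    simpa [hl] using cv_ne (hxy t) (hxz t) (hyz t) (w t)
  have d1 : ContinuousAt (fun t => s1 (x t)) t := ContinuousAt.comp c1 hx.continuousAt
  have d2 : ContinuousAt (fun t => s2 (y t)) t := ContinuousAt.comp c2 hy.continuousAt
  have d3 : ContinuousAt (fun t => s3 (z t)) t := ContinuousAt.comp c3 hz.continuousAt
  have d4 : ContinuousAt (fun t => s4 (w t)) t := ContinuousAt.comp c4 hw.continuousAt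
  refine ContinuousAt.comp (f := fun t => cv (s1 (x t)) (s2 (y t)) (s3 (z t)) (s4 (w t))) hq ?_
  simp only [cv, dt]
  fun_prop

theorem base_case (f : OnePoint ℂ → OnePoint ℂ) (hf : IsotopicToIdRel f ∅) (a b c : OnePoint ℂ)
    (hab : a ≠ b) (hac : a ≠ c) (hbc : b ≠ c) (ha : f a = a) (hb : f b = b) (hc : f c = c) :
    IsotopicToIdRel f {a, b, c} ∧ ∃ e : OnePoint ℂ ≃ₜ OnePoint ℂ,
      e a = ((0 : ℂ) : OnePoint ℂ) ∧ e b = ((1 : ℂ) : OnePoint ℂ) ∧ e c = OnePoint.infty := by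
  obtain ⟨H, Hc, Hh, H0, H1, -⟩ := hf
  have hCR : IsHomeomorph (CR a b c) := by
    rw [isHomeomorph_iff_continuous_bijective]
    refine ⟨?_, CR_bij hab hac hbc⟩
    exact CR_cont (fun _ => a) (fun _ => b) (fun _ => c) id continuous_const continuous_const
      continuous_const continuous_id (fun _ => hab) (fun _ => hac) (fun _ => hbc)
  let e := hCR.homeomorph
  have he : ∀ w, e w = CR a b c w := fun w => rfl
  refine ⟨?_, e, CR_x hab hac hbc, CR_y hab hac hbc, CR_z hab hac hbc⟩
  have hne : ∀ u v, u ≠ v → ∀ t, H (t, u) ≠ H (t, v) := fun u v huv t h =>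
    huv ((Hh t).injective h)
  let L : unitInterval × OnePoint ℂ → OnePoint ℂ := fun q =>
    e.symm (CR (H (q.1, a)) (H (q.1, b)) (H (q.1, c)) (H q))
  have Lc : Continuous L := by
    refine e.symm.continuous.comp ?_
    refine CR_cont _ _ _ _ ?_ ?_ ?_ Hc (fun q => hne a b hab q.1) (fun q => hne a c hac q.1)
      (fun q => hne b c hbc q.1)
    · exact Hc.comp (by fun_prop)
    · exact Hc.comp (by fun_prop)
    · exact Hc.comp (by fun_prop)
  refine ⟨L, Lc, ?_, ?_, ?_, ?_⟩
  · intro t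
    rw [isHomeomorph_iff_continuous_bijective]
    refine ⟨Lc.comp (by fun_prop), ?_⟩
    exact e.symm.bijective.comp ((CR_bij (hne a b hab t) (hne a c hac t) (hne b c hbc t)).comp
      (Hh t).bijective)
  · intro w
    simp only [L, H0]
    rw [← he, e.symm_apply_apply]
  · intro w
    simp only [L, H1, ha, hb, hc]
    rw [← he, e.symm_apply_apply]
  · intro t w hw
    simp only [L]
    rw [e.symm_apply_eq, he]
    rcases hw with rfl | rfl | rfl
    · rw [CR_x hab hac hbc, CR_x (hne _ _ hab t) (hne _ _ hac t) (hne _ _ hbc t)]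
    · rw [CR_y hab hac hbc, CR_y (hne _ _ hab t) (hne _ _ hac t) (hne _ _ hbc t)]
    · rw [CR_z hab hac hbc, CR_z (hne _ _ hab t) (hne _ _ hac t) (hne _ _ hbc t)]

end PP

end

section

open Topology

namespace PP

theorem exists_restrict {Z Y : Type} [TopologicalSpace Z] [TopologicalSpace Y] (j : Y → Z)
    (hj : IsEmbedding j) (H : unitInterval × Z → Z) (hH : Continuous H)
    (hr : ∀ t y, ∃ y', j y' = H (t, j y)) :
    ∃ K : unitInterval × Y → Y, Continuous K ∧ ∀ q, j (K q) = H (q.1, j q.2) := by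
  choose K hK using hr
  refine ⟨fun q => K q.1 q.2, ?_, fun q => hK _ _⟩
  rw [hj.continuous_iff]
  have : j ∘ (fun q : unitInterval × Y => K q.1 q.2) = fun q => H (q.1, j q.2) := by
    funext q
    exact hK _ _
  rw [this]
  have := hj.continuous
  exact hH.comp (by fun_prop)

theorem add_point (f : OnePoint ℂ → OnePoint ℂ) (A : Set ℂ) (hA : A.Finite) (hA2 : A.Nontrivial)
    (p : ℂ) (hpA : p ∉ A) (hfp : f p = p)
    (hH : IsotopicToIdRel f (insert OnePoint.infty (OnePoint.some '' A))) (k : ℕ) (hk : 1 ≤ k)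
    (hH' : IsotopicToIdRel f^[k] (insert (p : OnePoint ℂ)
      (insert OnePoint.infty (OnePoint.some '' A)))) :
    IsotopicToIdRel f (insert (p : OnePoint ℂ) (insert OnePoint.infty (OnePoint.some '' A))) := by
  obtain ⟨H, Hc, Hh, H0, H1, HF⟩ := hH
  obtain ⟨H', Hc', Hh', H0', H1', HF'⟩ := hH'
  let j : {z : ℂ // z ∉ A} → OnePoint ℂ := fun y => (y.1 : OnePoint ℂ)
  have hj : IsEmbedding j :=
    OnePoint.isOpenEmbedding_coe.isEmbedding.comp IsEmbedding.subtypeVal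
  have hres : ∀ L : unitInterval × OnePoint ℂ → OnePoint ℂ,
      (∀ t, IsHomeomorph fun x => L (t, x)) →
      (∀ t, ∀ x ∈ insert OnePoint.infty (OnePoint.some '' A), L (t, x) = x) →
      ∀ t y, ∃ y', j y' = L (t, j y) := by
    intro L hL hLF t y
    have hinj : ∀ x x', L (t, x) = L (t, x') → x = x' := fun x x' h => (hL t).injective h
    have hne : L (t, j y) ≠ OnePoint.infty := by
      intro h
      have := hinj _ _ (h.trans (hLF t OnePoint.infty (Set.mem_insert _ _)).symm)
      exact OnePoint.coe_ne_infty _ this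
    obtain ⟨z, hz⟩ := OnePoint.ne_infty_iff_exists.1 hne
    refine ⟨⟨z, ?_⟩, hz⟩
    intro hzA
    have h2 := hLF t z (Set.mem_insert_of_mem _ ⟨z, hzA, rfl⟩)
    have h3 := hinj _ _ (hz.symm.trans h2.symm)
    have h4 : y.1 = z := OnePoint.coe_injective h3
    exact y.2 (h4 ▸ hzA)
  obtain ⟨K, Kc, hK⟩ := exists_restrict j hj H Hc (hres H Hh HF)
  obtain ⟨K', Kc', hK'⟩ := exists_restrict j hj H' Hc' (hres H' Hh' fun t x hx =>
    HF' t x (Set.mem_insert_of_mem _ hx))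
  let b : {z : ℂ // z ∉ A} := ⟨p, hpA⟩
  let g : {z : ℂ // z ∉ A} → {z : ℂ // z ∉ A} := fun y => K (1, y)
  have hg : ∀ y, j (g y) = f (j y) := fun y => (hK _).trans (H1 _)
  have hgk : ∀ n y, j (g^[n] y) = f^[n] (j y) := by
    intro n
    induction n with
    | zero => intro y; rfl
    | succ n ih =>
      intro y
      rw [Function.iterate_succ_apply, Function.iterate_succ_apply, ih, hg]
  have hgb : g b = b := hj.injective ((hg b).trans hfp)
  have K0 : ∀ y, K (0, y) = y := fun y => hj.injective ((hK _).trans (H0 _))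
  have K0' : ∀ y, K' (0, y) = y := fun y => hj.injective ((hK' _).trans (H0' _))
  let γ : Path b b := ⟨⟨fun t => K (t, b), by fun_prop⟩, K0 b, hgb⟩
  have hcen := trace_central g K K' (by fun_prop) Kc Kc' K0 (fun y => rfl) k K0'
    (fun y => hj.injective ((hK' _).trans ((H1' _).trans (hgk k y).symm))) b hgb
    (fun t => hj.injective ((hK' _).trans (HF' t _ (Set.mem_insert _ _)))) γ (fun t => rfl)
  have hone := pi1_root A hA hA2 b _ k hk hcen
  have hone' : Path.Homotopic.Quotient.mk γ = Path.Homotopic.Quotient.mk (Path.refl b) := hone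
  obtain ⟨h⟩ := Path.Homotopic.Quotient.eq.1 hone'
  have := isoTr_homotopy (f := f) hA (p := (p : OnePoint ℂ)) (fun q => (h q).1)
    (continuous_subtype_val.comp h.continuous)
    (fun q => (h q).2) p (fun s => by simp [b]) (fun s => by simp [b])
    ⟨H, Hc, Hh, H0, H1, HF, fun t => by
      have e : h (0, t) = K (t, b) := h.apply_zero t
      beta_reduce
      rw [e]
      exact (hK (t, b)).symm⟩
  obtain ⟨L, Lc, Lh, L0, L1, LF, Lp⟩ := this
  refine ⟨L, Lc, Lh, L0, L1, ?_⟩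
  rintro t x (rfl | hx)
  · rw [Lp]
    have e : h (1, t) = b := h.apply_one t
    beta_reduce
    rw [e]
  · exact LF t x hx

end PP

end

theorem IsotopicToIdRel.conj {X X' : Type*} [TopologicalSpace X] [TopologicalSpace X'] {f : X → X}
    {F : Set X} (h : IsotopicToIdRel f F) (e : X ≃ₜ X') :
    IsotopicToIdRel (e ∘ f ∘ e.symm) (e '' F) := by
  obtain ⟨H, Hc, Hh, H0, H1, HF⟩ := h
  refine ⟨fun q => e (H (q.1, e.symm q.2)), ?_, ?_, ?_, ?_, ?_⟩
  · exact e.continuous.comp (Hc.comp (by fun_prop))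
  · intro t
    exact e.isHomeomorph.comp ((Hh t).comp e.symm.isHomeomorph)
  · intro x
    simp [H0]
  · intro x
    simp [H1]
  · rintro t _ ⟨x, hx, rfl⟩
    simp [HF t x hx]

theorem IsotopicToIdRel.unconj {X X' : Type*} [TopologicalSpace X] [TopologicalSpace X']
    {f : X → X} {F : Set X} (e : X ≃ₜ X') (h : IsotopicToIdRel (e ∘ f ∘ e.symm) (e '' F)) :
    IsotopicToIdRel f F := by
  have := h.conj e.symm
  have e1 : e.symm ∘ (e ∘ f ∘ e.symm) ∘ e.symm.symm = f := by
    funext x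
    simp
  have e2 : e.symm '' (e '' F) = F := by
    rw [← Set.image_comp]
    simp
  rwa [e1, e2] at this

theorem conj_iterate {X X' : Type*} [TopologicalSpace X] [TopologicalSpace X']
    (f : X → X) (e : X ≃ₜ X') (n : ℕ) : (e ∘ f ∘ e.symm)^[n] = e ∘ f^[n] ∘ e.symm := by
  induction n with
  | zero => funext x; simp
  | succ n ih =>
    funext x
    rw [Function.iterate_succ_apply', ih, Function.comp_apply, Function.comp_apply,
      Function.comp_apply, Function.comp_apply, Function.comp_apply, Function.comp_apply,
      Function.iterate_succ_apply', e.symm_apply_apply]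

theorem IsotopicToIdRel.mono {X : Type*} [TopologicalSpace X] {f : X → X} {F G : Set X}
    (h : IsotopicToIdRel f F) (hG : G ⊆ F) : IsotopicToIdRel f G := by
  obtain ⟨H, Hc, Hh, H0, H1, HF⟩ := h
  exact ⟨H, Hc, Hh, H0, H1, fun t x hx => HF t x (hG hx)⟩

theorem PP.normalized (f : OnePoint ℂ → OnePoint ℂ) (F : Set (OnePoint ℂ)) (hF : F.Finite)
    (hfix : ∀ x ∈ F, f x = x) (h0 : ((0 : ℂ) : OnePoint ℂ) ∈ F) (h1 : ((1 : ℂ) : OnePoint ℂ) ∈ F)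
    (hinf : OnePoint.infty ∈ F)
    (hf : IsotopicToIdRel f {((0 : ℂ) : OnePoint ℂ), ((1 : ℂ) : OnePoint ℂ), OnePoint.infty})
    (k : ℕ) (hk : 1 ≤ k) (hfk : IsotopicToIdRel f^[k] F) : IsotopicToIdRel f F := by
  let B : Set ℂ := OnePoint.some ⁻¹' F
  have hB : B.Finite := hF.preimage OnePoint.coe_injective.injOn
  have key : ∀ C : Set ℂ, C.Finite → C ⊆ B →
      IsotopicToIdRel f (insert OnePoint.infty (OnePoint.some '' (C ∪ {0, 1}))) := by
    intro C hC
    induction C, hC using Set.Finite.induction_on with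
    | empty =>
      intro _
      refine hf.mono ?_
      rintro x (rfl | ⟨a, ha, rfl⟩)
      · simp
      · simp at ha
        rcases ha with rfl | rfl <;> simp
    | @insert p C hp hC ih =>
      intro hCB
      have ih := ih fun x hx => hCB (Set.mem_insert_of_mem _ hx)
      by_cases hpA : p ∈ C ∪ {0, 1}
      · have : insert p C ∪ {0, 1} = C ∪ {0, 1} := by
          rw [Set.insert_union, Set.insert_eq_of_mem hpA]
        rw [this]
        exact ih
      · have hpB : (p : OnePoint ℂ) ∈ F := hCB (Set.mem_insert _ _)
        have := PP.add_point f (C ∪ {0, 1}) (hC.union (by simp))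
          ⟨0, by simp, 1, by simp, zero_ne_one⟩ p hpA (hfix _ hpB) ih k hk (hfk.mono (by
            rintro x (rfl | rfl | ⟨a, (ha | rfl | rfl), rfl⟩)
            · exact hpB
            · exact hinf
            · exact hCB (Set.mem_insert_of_mem _ ha)
            · exact h0
            · exact h1))
        rw [Set.insert_union, Set.image_insert_eq, Set.insert_comm]
        exact this
  refine (key B hB subset_rfl).mono ?_
  intro x hx
  induction x using OnePoint.rec with
  | infty => exact Set.mem_insert _ _
  | coe z => exact Set.mem_insert_of_mem _ ⟨z, Or.inl hx, rfl⟩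

theorem PP.onePoint_case (f : OnePoint ℂ → OnePoint ℂ) (hiso : IsotopicToIdRel f ∅)
    (F : Set (OnePoint ℂ)) (hF : F.Finite)
    (hfix : ∀ x ∈ F, f x = x) (hF3 : 3 ≤ F.ncard)
    (k : ℕ) (hk : 1 ≤ k) (hfk : IsotopicToIdRel f^[k] F) : IsotopicToIdRel f F := by
  obtain ⟨a, b, c, ha, hb, hc, hab, hac, hbc⟩ := (Set.two_lt_ncard_iff hF).1 hF3
  obtain ⟨h, e, ea, eb, ec⟩ := PP.base_case f hiso a b c hab hac hbc (hfix a ha) (hfix b hb)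
    (hfix c hc)
  apply IsotopicToIdRel.unconj e
  refine PP.normalized _ _ (hF.image e) ?_ ⟨a, ha, ea⟩ ⟨b, hb, eb⟩ ⟨c, hc, ec⟩ ?_ k hk ?_
  · rintro _ ⟨x, hx, rfl⟩
    simp [hfix x hx]
  · have := h.conj e
    rwa [Set.image_insert_eq, Set.image_pair, ea, eb, ec] at this
  · rw [conj_iterate]
    exact hfk.conj e

theorem stmt11 (f : sphere (0 : EuclideanSpace ℝ (Fin 3)) 1 →
      sphere (0 : EuclideanSpace ℝ (Fin 3)) 1)
    (hf : IsHomeomorph f) (hiso : IsotopicToIdRel f ∅)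
    (F : Set (sphere (0 : EuclideanSpace ℝ (Fin 3)) 1))
    (hFfix : F ⊆ {x | f x = x}) (hFfin : F.Finite) (hF3 : 3 ≤ F.ncard)
    (k : ℕ) (hk : 1 ≤ k) (hfk : IsotopicToIdRel f^[k] F) :
    IsotopicToIdRel f F := by
  let e := (onePointEquivSphereOfFinrankEq (ι := Fin 3) (V := ℂ)
    (by simp [Complex.finrank_real_complex])).symm
  apply IsotopicToIdRel.unconj e
  refine PP.onePoint_case _ ?_ _ (hFfin.image e) ?_ ?_ k hk ?_
  · have := hiso.conj e
    rwa [Set.image_empty] at this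
  · rintro _ ⟨x, hx, rfl⟩
    have : f x = x := hFfix hx
    simp [this]
  · rw [Set.ncard_image_of_injective _ e.injective]
    exact hF3
  · rw [conj_iterate]
    exact hfk.conj e
end
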